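/- Let G be a cactus graph on n vertices with k cycles. If G is not antipodal, then there exists an antipodal cactus graph G′ on n vertices with k cycles such that gpn(G′) > gpn(G). -/

import Mathlib

/-!
A cactus that is not antipodal can be turned into a cactus with the same number of cycles and
strictly more geodesics (`improve`). There are finitely many graphs on `V`, so among the cacti with
`k` cycles and more geodesics than `G` one maximizes the number of geodesics; by `improve` it is
antipodal.

To improve a cactus, fix one of its cycles. The cactus consists of this *core* together with a
branch at every vertex of the core (`exists_branched`). The branches are kept, but the core may be
replaced by another graph on the same vertices and the branches may be attached to other core
vertices; this operation is called regrafting (`regraft`). A geodesic between two branches leaves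
the first one through its root, crosses the core and enters the second one through its root, so the
number of geodesics is a product of three factors (`Branched.regraft_geodesics`). Hence the
comparison of two regrafted graphs reduces to a comparison of their cores (`totalGeodesics_lt`).

* If some cycle has length `g ≥ 5`, the core is replaced by a square with `g - 4` pendant vertices
  attached at two antipodal vertices. In a cycle two vertices are joined by one geodesic, or by two
  if they are antipodal; the labels are chosen such that antipodal pairs of the cycle still have two
  geodesics in the new core, and some other pair has gained one (`improve_long`).
* Otherwise some square has two adjacent active vertices. The branches at each of two opposite edges
  of the square are merged, and the two merged branches are placed at antipodal vertices
  (`improve_square`).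

The number of cycles does not change because in a cactus it is the cyclomatic number
(`ncard_cycleEdgeSets`), which depends on the numbers of vertices and edges only
(`isCactus_regraft`).
-/

open SimpleGraph

/-- The number of geodesics (shortest paths) in `G` between `u` and `v`. -/
noncomputable def numGeodesics {V : Type*} (G : SimpleGraph V) (u v : V) : ℕ :=
  {p : G.Walk u v | p.IsPath ∧ p.length = G.dist u v}.ncard

lemma numGeodesics_comm {V : Type*} (G : SimpleGraph V) (u v : V) :
    numGeodesics G u v = numGeodesics G v u := by
  have himg : {p : G.Walk v u | p.IsPath ∧ p.length = G.dist v u} =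
      (fun p : G.Walk u v => p.reverse) '' {p : G.Walk u v | p.IsPath ∧ p.length = G.dist u v} := by
    ext p
    constructor
    · rintro ⟨hp, hl⟩
      exact ⟨p.reverse, ⟨hp.reverse, by
        rw [SimpleGraph.Walk.length_reverse, hl, SimpleGraph.dist_comm]⟩, p.reverse_reverse⟩
    · rintro ⟨q, ⟨hq, hl⟩, rfl⟩
      exact ⟨hq.reverse, by rw [SimpleGraph.Walk.length_reverse, hl, SimpleGraph.dist_comm]⟩
  have hinj : Function.Injective (fun p : G.Walk u v => p.reverse) := by
    intro p q h
    simpa using congrArg SimpleGraph.Walk.reverse h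
  unfold numGeodesics
  rw [himg, Set.ncard_image_of_injective _ hinj]

/-- The geodesic subpath number of a finite graph: the sum, over unordered pairs of
distinct vertices, of the number of geodesics between them, plus `n` for the `n`
geodesics of length zero. -/
noncomputable def gpn {V : Type*} [Fintype V] [DecidableEq V] (G : SimpleGraph V) : ℕ :=
  (∑ e ∈ Finset.univ.filter (fun e : Sym2 V => ¬ e.IsDiag),
      Sym2.lift ⟨fun u v => numGeodesics G u v, fun u v => numGeodesics_comm G u v⟩ e)
    + Fintype.card V

/-- The cycles of `G`, recorded as their edge sets. -/
def cycleEdgeSets {V : Type*} (G : SimpleGraph V) : Set (Set (Sym2 V)) :=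
  {s | ∃ (u : V) (c : G.Walk u u), c.IsCycle ∧ s = {e | e ∈ c.edges}}

/-- A cactus graph: a connected graph in which all cycles are pairwise edge-disjoint. -/
def IsCactus {V : Type*} (G : SimpleGraph V) : Prop :=
  G.Connected ∧ (cycleEdgeSets G).Pairwise Disjoint

/-- A girth restricted cactus graph: every cycle is a triangle or a square. -/
def IsGirthRestricted {V : Type*} (G : SimpleGraph V) : Prop :=
  ∀ (u : V) (c : G.Walk u u), c.IsCycle → c.length = 3 ∨ c.length = 4

/-- A vertex of a cactus graph is cyclic if it lies on a cycle; it is active if moreover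
its degree is at least `3`. -/
def IsActiveVertex {V : Type*} (G : SimpleGraph V) (v : V) : Prop :=
  (∃ (u : V) (c : G.Walk u u), c.IsCycle ∧ v ∈ c.support) ∧ 3 ≤ (G.neighborSet v).ncard

/-- An antipodal cactus graph: a girth restricted cactus in which every multiactive
square (a `4`-cycle with at least two active vertices) is antipodal, i.e. it has exactly
two active vertices and they form an antipodal (opposite) pair of the square. -/
def IsAntipodalCactus {V : Type*} (G : SimpleGraph V) : Prop :=
  IsCactus G ∧ IsGirthRestricted G ∧
    ∀ (u : V) (c : G.Walk u u), c.IsCycle → c.length = 4 →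
      (∃ x y : V, x ≠ y ∧ x ∈ c.support ∧ y ∈ c.support ∧
        IsActiveVertex G x ∧ IsActiveVertex G y) →
      ∃ x y : V, x ≠ y ∧ x ∈ c.support ∧ y ∈ c.support ∧
        IsActiveVertex G x ∧ IsActiveVertex G y ∧ s(x, y) ∉ c.edges ∧
        ∀ z ∈ c.support, IsActiveVertex G z → z = x ∨ z = y

/-! ### Counting geodesics -/

section Geodesics

open scoped Classical

variable {V : Type*} [Fintype V]

lemma numGeodesics_eq_card (G : SimpleGraph V) (u v : V) :
    numGeodesics G u v = (G.adjMatrix ℕ ^ G.dist u v) u v := by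
  rw [adjMatrix_pow_apply_eq_card_walk, Nat.cast_id, numGeodesics, ← Nat.card_coe_set_eq,
    ← Nat.card_eq_fintype_card]
  refine Nat.card_congr (Equiv.subtypeEquivRight fun p => ?_)
  exact ⟨fun h => h.2, fun h => ⟨p.isPath_of_length_eq_dist h, h⟩⟩

lemma numGeodesics_self (G : SimpleGraph V) (u : V) : numGeodesics G u u = 1 := by
  simp [numGeodesics_eq_card]

/-- Counting geodesics by their first step. -/
lemma numGeodesics_rec (G : SimpleGraph V) {u w : V} (hr : G.Reachable u w) (hne : u ≠ w) :
    numGeodesics G u w = ∑ x ∈ Finset.univ.filter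
      (fun x => G.Adj u x ∧ G.dist x w + 1 = G.dist u w), numGeodesics G x w := by
  obtain ⟨d, hd⟩ : ∃ d, G.dist u w = d + 1 :=
    Nat.exists_eq_succ_of_ne_zero (hr.pos_dist_of_ne hne).ne'
  rw [numGeodesics_eq_card, hd, pow_succ', Matrix.mul_apply, Finset.sum_filter]
  refine Finset.sum_congr rfl fun x _ => ?_
  by_cases hx : G.Adj u x
  · by_cases hxd : G.dist x w = d
    · simp [hx, hxd, numGeodesics_eq_card]
    · have h0 : (G.adjMatrix ℕ ^ d) x w = 0 := by
        rw [adjMatrix_pow_apply_eq_card_walk, Nat.cast_id, Fintype.card_eq_zero_iff]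
        refine ⟨fun p => ?_⟩
        have h1 := dist_le p.1
        have h2 := dist_le (Walk.cons hx p.1)
        rw [p.2] at h1
        rw [Walk.length_cons, p.2, hd] at h2
        have h3 := hx.diff_dist_adj (u := w)
        rw [dist_comm (u := w) (v := u), dist_comm (u := w) (v := x)] at h3
        omega
      simp [hxd, h0]
  · simp [hx]

lemma numGeodesics_pos (G : SimpleGraph V) {u w : V} (hr : G.Reachable u w) :
    1 ≤ numGeodesics G u w := by
  obtain ⟨p, hp⟩ := hr.exists_walk_length_eq_dist
  rw [numGeodesics, Nat.one_le_iff_ne_zero]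
  rw [← Nat.card_coe_set_eq]
  have : Finite ↥{p : G.Walk u w | p.IsPath ∧ p.length = G.dist u w} := by
    refine Finite.of_injective
      (β := {p : G.Walk u w // p.length = G.dist u w}) (fun q => ⟨q.1, q.2.2⟩) ?_
    intro a b h
    exact Subtype.ext (by simpa using h)
  have : Nonempty ↥{p : G.Walk u w | p.IsPath ∧ p.length = G.dist u w} :=
    ⟨⟨p, p.isPath_of_length_eq_dist hp, hp⟩⟩
  exact Nat.card_pos.ne'

/-- Distances towards `w` and numbers of geodesics to `w` are determined, on a set `U` of vertices
closed under adjacency, by the local equations they satisfy: `D` is `1`-Lipschitz along edges and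
decreases along some edge at every vertex other than `w`, and `N` is the sum of its values at the
neighbours closer to `w`. -/
lemma dist_numGeodesics_of_potential (G : SimpleGraph V) (w : V) (U : Set V) (D N : V → ℕ)
    (hU : ∀ u ∈ U, ∀ x, G.Adj u x → x ∈ U) (hD0 : D w = 0) (hN0 : N w = 1)
    (hdec : ∀ u ∈ U, u ≠ w → ∃ x, G.Adj u x ∧ D x + 1 = D u)
    (hlip : ∀ u ∈ U, ∀ x, G.Adj u x → D u ≤ D x + 1)
    (hN : ∀ u ∈ U, u ≠ w → N u = ∑ x ∈ Finset.univ.filter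
      (fun x => G.Adj u x ∧ D x + 1 = D u), N x) :
    ∀ u ∈ U, G.Reachable u w ∧ G.dist u w = D u ∧ numGeodesics G u w = N u := by
  have hwalk : ∀ n, ∀ u ∈ U, D u = n → ∃ p : G.Walk u w, p.length = n := by
    intro n
    induction n with
    | zero =>
      intro u hu hn
      by_cases huw : u = w
      · subst huw; exact ⟨Walk.nil, rfl⟩
      · obtain ⟨x, _, hx⟩ := hdec u hu huw
        omega
    | succ n ih =>
      intro u hu hn
      have huw : u ≠ w := by rintro rfl; omega
      obtain ⟨x, hx, hxD⟩ := hdec u hu huw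
      obtain ⟨p, hp⟩ := ih x (hU u hu x hx) (by omega)
      exact ⟨Walk.cons hx p, by simp [hp]⟩
  have hle : ∀ (u v : V) (p : G.Walk u v), v = w → u ∈ U → D u ≤ p.length := by
    intro u v p
    induction p with
    | nil => rintro rfl _; simp [hD0]
    | cons h p ih =>
      intro hv hu
      have h1 := hlip _ hu _ h
      have h2 := ih hv (hU _ hu _ h)
      rw [Walk.length_cons]
      omega
  have hdist : ∀ u ∈ U, G.Reachable u w ∧ G.dist u w = D u := by
    intro u hu
    obtain ⟨p, hp⟩ := hwalk _ u hu rfl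
    refine ⟨p.reachable, le_antisymm (hp ▸ dist_le p) ?_⟩
    obtain ⟨q, hq⟩ := p.reachable.exists_walk_length_eq_dist
    exact hq ▸ hle _ _ q rfl hu
  have hmain : ∀ n, ∀ u ∈ U, D u = n → numGeodesics G u w = N u := by
    intro n
    induction n with
    | zero =>
      intro u hu hn
      by_cases huw : u = w
      · subst huw; rw [hN0, numGeodesics_self]
      · obtain ⟨x, _, hx⟩ := hdec u hu huw
        omega
    | succ n ih =>
      intro u hu hn
      have huw : u ≠ w := by rintro rfl; omega
      rw [numGeodesics_rec G (hdist u hu).1 huw, hN u hu huw]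
      refine Finset.sum_congr ?_ ?_
      · ext x
        simp only [Finset.mem_filter, Finset.mem_univ, true_and]
        refine and_congr_right fun hx => ?_
        rw [(hdist u hu).2, (hdist x (hU u hu x hx)).2]
      · intro x hx
        simp only [Finset.mem_filter, Finset.mem_univ, true_and] at hx
        exact ih x (hU u hu x hx.1) (by omega)
  exact fun u hu => ⟨(hdist u hu).1, (hdist u hu).2, hmain _ u hu rfl⟩

/-- The sum of the numbers of geodesics over all ordered pairs of vertices. -/
noncomputable def totalGeodesics (G : SimpleGraph V) : ℕ :=
  ∑ u, ∑ w, numGeodesics G u w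

end Geodesics

/-- Every unordered pair of distinct vertices is counted twice in `totalGeodesics`, and every pair
`(u, u)` once. -/
lemma two_mul_gpn {V : Type*} [Fintype V] [DecidableEq V] (G : SimpleGraph V) :
    2 * gpn G = totalGeodesics G + Fintype.card V := by
  have hdiag : ∑ p ∈ (Finset.univ : Finset V).diag, numGeodesics G p.1 p.2 = Fintype.card V := by
    rw [Finset.sum_diag]
    simp [numGeodesics_self]
  have hoff : ∑ p ∈ (Finset.univ : Finset V).offDiag, numGeodesics G p.1 p.2 =
      2 * ∑ e ∈ Finset.univ.filter (fun e : Sym2 V => ¬ e.IsDiag),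
        Sym2.lift ⟨fun u v => numGeodesics G u v, fun u v => numGeodesics_comm G u v⟩ e := by
    rw [← Finset.sum_fiberwise_of_maps_to (s := (Finset.univ : Finset V).offDiag)
      (t := Finset.univ.filter (fun e : Sym2 V => ¬ e.IsDiag)) (g := fun p => s(p.1, p.2)),
      Finset.mul_sum]
    · refine Finset.sum_congr rfl fun e he => ?_
      induction e using Sym2.ind with
      | _ a b =>
        have hab : a ≠ b := by simpa using he
        have hf : (Finset.univ : Finset V).offDiag.filter (fun p => s(p.1, p.2) = s(a, b)) =
            {(a, b), (b, a)} := by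
          ext ⟨x, y⟩
          simp only [Finset.mem_filter, Finset.mem_offDiag, Finset.mem_univ, true_and,
            Finset.mem_insert, Finset.mem_singleton, Prod.mk.injEq, Sym2.eq_iff]
          constructor
          · exact fun h => h.2
          · rintro (⟨rfl, rfl⟩ | ⟨rfl, rfl⟩)
            · exact ⟨hab, by simp⟩
            · exact ⟨hab.symm, by simp⟩
        rw [hf, Finset.sum_pair (by simp [hab])]
        simp only [Sym2.lift_mk]
        rw [numGeodesics_comm G b a]
        ring
    · intro p hp
      simpa using hp
  have htot : totalGeodesics G = ∑ p ∈ (Finset.univ : Finset V).diag, numGeodesics G p.1 p.2 +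
      ∑ p ∈ (Finset.univ : Finset V).offDiag, numGeodesics G p.1 p.2 := by
    rw [← Finset.sum_union (Finset.disjoint_diag_offDiag _), Finset.diag_union_offDiag,
      Finset.sum_product, totalGeodesics]
  rw [htot, hdiag, hoff, gpn]
  ring

/-! ### Regrafting the branches of a graph -/

section Regraft

set_option linter.unusedSectionVars false

open scoped Classical

variable {V : Type*}

/-- Moves a core vertex (a fixed point of `π`) along `σ` and leaves the other vertices in place. -/
noncomputable def slide (π σ : V → V) (x : V) : V := if π x = x then σ x else x

/-- The core vertex at which the branch of `u` is attached after regrafting; a core vertex is its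
own anchor. -/
noncomputable def anchor (π σ : V → V) (u : V) : V := if π u = u then u else σ (π u)

/-- The graph `H` on the core (the fixed points of `π`) together with the branches of `R` (one on
each fibre of `π`), the branch rooted at the core vertex `i` being attached at `σ i` instead. -/
noncomputable def regraft (H R : SimpleGraph V) (π σ : V → V) : SimpleGraph V where
  Adj a b := H.Adj a b ∨ (a ≠ b ∧ ∃ x y, R.Adj x y ∧ slide π σ x = a ∧ slide π σ y = b)
  symm := ⟨by
    rintro a b (h | ⟨hne, x, y, h, hx, hy⟩)
    · exact Or.inl h.symm
    · exact Or.inr ⟨hne.symm, y, x, h.symm, hy, hx⟩⟩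
  loopless := ⟨by
    rintro a (h | ⟨hne, _⟩)
    · exact H.loopless.irrefl a h
    · exact hne rfl⟩

/-- `π` is a retraction onto the core, `H` lives on the core, every branch (fibre of `π`) is spanned
by a connected piece of `R`, and `σ` maps the core into itself. -/
structure Branched (H R : SimpleGraph V) (π σ : V → V) : Prop where
  idem : ∀ u, π (π u) = π u
  core : ∀ a b, H.Adj a b → π a = a
  fib : ∀ a b, R.Adj a b → π a = π b
  reach : ∀ u, R.Reachable u (π u)
  maps : ∀ u, π u = u → π (σ u) = σ u

namespace Branched

variable {H R : SimpleGraph V} {π σ : V → V} (B : Branched H R π σ)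
include B

lemma slide_inj {x y : V} (hp : π x = π y) (h : slide π σ x = slide π σ y) : x = y := by
  unfold slide at h
  split_ifs at h with h1 h2 h2
  · rw [← h1, ← h2, hp]
  · exact absurd (h ▸ B.maps x h1) h2
  · exact absurd (h ▸ B.maps y h2) h1
  · exact h

lemma slide_ne {x y : V} (h : R.Adj x y) : slide π σ x ≠ slide π σ y :=
  fun he => h.ne (B.slide_inj (B.fib _ _ h) he)

lemma adj_iff {a b : V} : (regraft H R π σ).Adj a b ↔
    H.Adj a b ∨ ∃ x y, R.Adj x y ∧ slide π σ x = a ∧ slide π σ y = b := by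
  constructor
  · rintro (h | ⟨_, h⟩)
    · exact Or.inl h
    · exact Or.inr h
  · rintro (h | ⟨x, y, h, rfl, rfl⟩)
    · exact Or.inl h
    · exact Or.inr ⟨B.slide_ne h, x, y, h, rfl, rfl⟩

lemma not_core_of_adj {x y : V} (h : R.Adj x y) (hx : π x = x) : π y ≠ y := by
  intro hy
  exact h.ne (by rw [← hx, ← hy, B.fib _ _ h])

lemma anchor_slide (x : V) : anchor π σ (slide π σ x) = σ (π x) := by
  unfold anchor slide
  by_cases h : π x = x
  · simp [h, B.maps x h]
  · simp [h]

end Branched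

lemma slide_of_core {π σ : V → V} {x : V} (h : π x = x) : slide π σ x = σ x := if_pos h
lemma slide_of_not_core {π σ : V → V} {x : V} (h : π x ≠ x) : slide π σ x = x := if_neg h
lemma anchor_of_core {π σ : V → V} {x : V} (h : π x = x) : anchor π σ x = x := if_pos h
lemma anchor_of_not_core {π σ : V → V} {x : V} (h : π x ≠ x) : anchor π σ x = σ (π x) := if_neg h

/-- `u` and `w` lie on the same branch, away from its root. -/
def SameBranch (π : V → V) (u w : V) : Prop := π u = π w ∧ π u ≠ u ∧ π w ≠ w

/-- The distance from `u` to `w` in the regrafted graph, provided that their anchors are connected in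
`H`; see `Branched.regraft_geodesics`. -/
noncomputable def glueDist (H R : SimpleGraph V) (π σ : V → V) (u w : V) : ℕ :=
  if SameBranch π u w then R.dist u w
  else R.dist u (π u) + H.dist (anchor π σ u) (anchor π σ w) + R.dist w (π w)

/-- The number of geodesics from `u` to `w` in the regrafted graph: unless `u` and `w` lie on
the same branch, a geodesic descends from `u` to its root, crosses the core, and climbs to `w`. -/
noncomputable def glueNum (H R : SimpleGraph V) (π σ : V → V) (u w : V) : ℕ :=
  if SameBranch π u w then numGeodesics R u w
  else numGeodesics R u (π u) * numGeodesics H (anchor π σ u) (anchor π σ w) *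
    numGeodesics R w (π w)

lemma adj_dist_le (G : SimpleGraph V) {u v w : V} (h : G.Adj u v) :
    G.dist u w ≤ G.dist v w + 1 := by
  have h3 := h.diff_dist_adj (u := w)
  rw [dist_comm (u := w) (v := u), dist_comm (u := w) (v := v)] at h3
  omega

variable [Fintype V]

namespace Branched

variable {H R : SimpleGraph V} {π σ : V → V} (B : Branched H R π σ)
include B

lemma glueDist_slide (x w : V) : glueDist H R π σ (slide π σ x) w =
    if π x = π w ∧ π w ≠ w then R.dist x w
    else R.dist x (π x) + H.dist (σ (π x)) (anchor π σ w) + R.dist w (π w) := by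
  unfold glueDist SameBranch
  rw [B.anchor_slide]
  by_cases hx : π x = x
  · simp only [slide_of_core hx, B.maps x hx, ne_eq, not_true_eq_false, false_and, and_false,
      if_false, SimpleGraph.dist_self, zero_add]
    split_ifs with h
    · rw [anchor_of_not_core h.2, ← h.1, SimpleGraph.dist_self, zero_add, hx, dist_comm]
    · rw [hx, SimpleGraph.dist_self, zero_add]
  · simp [slide_of_not_core hx, hx]

lemma glueNum_slide (x w : V) : glueNum H R π σ (slide π σ x) w =
    if π x = π w ∧ π w ≠ w then numGeodesics R x w
    else numGeodesics R x (π x) * numGeodesics H (σ (π x)) (anchor π σ w) *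
      numGeodesics R w (π w) := by
  unfold glueNum SameBranch
  rw [B.anchor_slide]
  by_cases hx : π x = x
  · simp only [slide_of_core hx, B.maps x hx, ne_eq, not_true_eq_false, false_and, and_false,
      if_false, numGeodesics_self, one_mul]
    split_ifs with h
    · rw [anchor_of_not_core h.2, ← h.1, numGeodesics_self, one_mul, hx, numGeodesics_comm]
    · rw [hx, numGeodesics_self, one_mul]
  · simp [slide_of_not_core hx, hx]

lemma glueDist_core {u : V} (hu : π u = u) (w : V) :
    glueDist H R π σ u w = H.dist u (anchor π σ w) + R.dist w (π w) := by
  simp [glueDist, SameBranch, hu, anchor_of_core hu]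

lemma glueNum_core {u : V} (hu : π u = u) (w : V) :
    glueNum H R π σ u w = numGeodesics H u (anchor π σ w) * numGeodesics R w (π w) := by
  simp [glueNum, SameBranch, hu, anchor_of_core hu, numGeodesics_self]

/-- The recursion by the first step of a geodesic. If `u` is a core vertex, its neighbours lie in the
core or on the branches attached at `u`, and of the latter only those on the branch of `w` can be
closer to `w`; if `u` lies inside a branch, so do the first steps, up to the root. -/
lemma glueNum_rec {u w : V} (hreach : H.Reachable (anchor π σ u) (anchor π σ w)) (huw : u ≠ w) :
    glueNum H R π σ u w = ∑ y ∈ Finset.univ.filter (fun y => (regraft H R π σ).Adj u y ∧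
      glueDist H R π σ y w + 1 = glueDist H R π σ u w), glueNum H R π σ y w := by
  by_cases hu : π u = u
  · rw [anchor_of_core hu] at hreach
    -- A neighbour of `u` along a branch is a non-core vertex whose branch is attached at `u`.
    have hbr : ∀ x y, R.Adj x y → slide π σ x = u → π x = x ∧ σ x = u ∧ π y ≠ y ∧
        slide π σ y = y ∧ π y = x := by
      intro x y hxy hx
      have hxc : π x = x := by
        by_contra hxc
        rw [slide_of_not_core hxc] at hx
        exact hxc (hx ▸ hu)
      have hy := B.not_core_of_adj hxy hxc
      exact ⟨hxc, (slide_of_core hxc).symm.trans hx, hy, slide_of_not_core hy,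
        by rw [← B.fib _ _ hxy, hxc]⟩
    by_cases huρ : u = anchor π σ w
    · have hw : π w ≠ w := by
        intro hw
        rw [anchor_of_core hw] at huρ
        exact huw huρ
      have hu' : σ (π w) = u := by rw [huρ, anchor_of_not_core hw]
      rw [B.glueNum_core hu, B.glueDist_core hu, ← huρ, numGeodesics_self, one_mul, SimpleGraph.dist_self,
        zero_add, numGeodesics_comm, numGeodesics_rec R (B.reach w).symm hw]
      symm
      refine Finset.sum_congr (Eq.symm ?_) ?_
      · ext y
        simp only [Finset.mem_filter, Finset.mem_univ, true_and]
        constructor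
        · rintro ⟨hy, hd⟩
          have hync := B.not_core_of_adj hy (B.idem w)
          have hs : slide π σ y = y := slide_of_not_core hync
          refine ⟨B.adj_iff.2 (Or.inr ⟨π w, y, hy, ?_, hs⟩), ?_⟩
          · rw [slide_of_core (B.idem w), hu']
          · have h := B.glueDist_slide y w
            have hp : π y = π w := by rw [← B.fib _ _ hy, B.idem]
            rw [hs, if_pos ⟨hp, hw⟩] at h
            rw [h, hd, dist_comm]
        · rintro ⟨hy, hd⟩
          rcases B.adj_iff.1 hy with hy | ⟨x, z, hxz, hx, rfl⟩
          · rw [B.glueDist_core (B.core _ _ hy.symm)] at hd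
            omega
          · obtain ⟨hxc, hσ, hzn, hs, hz⟩ := hbr x z hxz hx
            rw [B.glueDist_slide] at hd
            rw [hs]
            split_ifs at hd with hc
            · have hxw : x = π w := by rw [← hz, hc.1]
              exact ⟨hxw ▸ hxz, by rw [hd, dist_comm]⟩
            · omega
      · intro y hy
        simp only [Finset.mem_filter, Finset.mem_univ, true_and] at hy
        have hync := B.not_core_of_adj hy.1 (B.idem w)
        have h := B.glueNum_slide y w
        have hp : π y = π w := by rw [← B.fib _ _ hy.1, B.idem]
        rw [slide_of_not_core hync, if_pos ⟨hp, hw⟩] at h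
        exact h
    · rw [B.glueNum_core hu, B.glueDist_core hu, numGeodesics_rec H hreach huρ, Finset.sum_mul]
      symm
      refine Finset.sum_congr (Eq.symm ?_) ?_
      · ext y
        simp only [Finset.mem_filter, Finset.mem_univ, true_and]
        constructor
        · rintro ⟨hy, hd⟩
          refine ⟨B.adj_iff.2 (Or.inl hy), ?_⟩
          rw [B.glueDist_core (B.core _ _ hy.symm)]
          omega
        · rintro ⟨hy, hd⟩
          rcases B.adj_iff.1 hy with hy | ⟨x, z, hxz, hx, rfl⟩
          · rw [B.glueDist_core (B.core _ _ hy.symm)] at hd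
            exact ⟨hy, by omega⟩
          · exfalso
            obtain ⟨hxc, hσ, hzn, hs, hz⟩ := hbr x z hxz hx
            rw [B.glueDist_slide, hz, hσ] at hd
            split_ifs at hd with hc
            · exact huρ (by rw [anchor_of_not_core hc.2, ← hc.1, hσ])
            · omega
      · intro y hy
        simp only [Finset.mem_filter, Finset.mem_univ, true_and] at hy
        rw [B.glueNum_core (B.core _ _ hy.1.symm)]
  · have hsu : slide π σ u = u := slide_of_not_core hu
    have hset : Finset.univ.filter (fun y => (regraft H R π σ).Adj u y ∧
        glueDist H R π σ y w + 1 = glueDist H R π σ u w) =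
        (Finset.univ.filter (fun x => R.Adj u x ∧ glueDist H R π σ (slide π σ x) w + 1 =
          glueDist H R π σ (slide π σ u) w)).image (slide π σ) := by
      ext y
      simp only [Finset.mem_filter, Finset.mem_univ, true_and, Finset.mem_image, hsu]
      constructor
      · rintro ⟨hy, hd⟩
        rcases B.adj_iff.1 hy with hy | ⟨x, z, hxz, hx, rfl⟩
        · exact absurd (B.core _ _ hy) hu
        · have hxu : x = u := by
            by_cases hxc : π x = x
            · exfalso
              rw [slide_of_core hxc] at hx
              exact hu (hx ▸ B.maps x hxc)
            · rwa [slide_of_not_core hxc] at hx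
          subst hxu
          exact ⟨z, ⟨hxz, hd⟩, rfl⟩
      · rintro ⟨x, ⟨hx, hd⟩, rfl⟩
        exact ⟨B.adj_iff.2 (Or.inr ⟨u, x, hx, hsu, rfl⟩), hd⟩
    rw [hset, Finset.sum_image]
    · conv_lhs => rw [← hsu]
      simp only [B.glueNum_slide, B.glueDist_slide]
      by_cases hc : π u = π w ∧ π w ≠ w
      · have hruw : R.Reachable u w := (B.reach u).trans (hc.1 ▸ (B.reach w).symm)
        rw [if_pos hc, numGeodesics_rec R hruw huw]
        refine Finset.sum_congr ?_ ?_
        · ext x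
          simp only [Finset.mem_filter, Finset.mem_univ, true_and, if_pos hc]
          refine and_congr_right fun hx => ?_
          rw [if_pos (show π x = π w ∧ π w ≠ w from ⟨B.fib _ _ hx ▸ hc.1, hc.2⟩)]
        · intro x hx
          simp only [Finset.mem_filter, Finset.mem_univ, true_and] at hx
          rw [if_pos (show π x = π w ∧ π w ≠ w from ⟨B.fib _ _ hx.1 ▸ hc.1, hc.2⟩)]
      · rw [if_neg hc, numGeodesics_rec R (B.reach u) (Ne.symm hu), Finset.sum_mul, Finset.sum_mul]
        refine Finset.sum_congr ?_ ?_
        · ext x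
          simp only [Finset.mem_filter, Finset.mem_univ, true_and, if_neg hc]
          refine and_congr_right fun hx => ?_
          rw [← B.fib _ _ hx, if_neg hc]
          omega
        · intro x hx
          simp only [Finset.mem_filter, Finset.mem_univ, true_and] at hx
          rw [← B.fib _ _ hx.1, if_neg hc]
    · intro x hx y hy hxy
      simp only [Finset.coe_filter, Finset.mem_univ, true_and, Set.mem_ofPred_eq] at hx hy
      exact B.slide_inj (by rw [← B.fib _ _ hx.1, ← B.fib _ _ hy.1]) hxy

/-- Distances and numbers of geodesics in a regrafted graph. -/
lemma regraft_geodesics {u w : V} (hreach : H.Reachable (anchor π σ u) (anchor π σ w)) :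
    (regraft H R π σ).Reachable u w ∧ (regraft H R π σ).dist u w = glueDist H R π σ u w ∧
      numGeodesics (regraft H R π σ) u w = glueNum H R π σ u w := by
  have hNrec : ∀ u ∈ {u | H.Reachable (anchor π σ u) (anchor π σ w)}, u ≠ w →
      glueNum H R π σ u w = ∑ y ∈ Finset.univ.filter (fun y => (regraft H R π σ).Adj u y ∧
      glueDist H R π σ y w + 1 = glueDist H R π σ u w), glueNum H R π σ y w :=
    fun u hu huw => B.glueNum_rec hu huw
  have hpos : ∀ u ∈ {u | H.Reachable (anchor π σ u) (anchor π σ w)},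
      0 < glueNum H R π σ u w := by
    intro u hu
    unfold glueNum SameBranch
    split_ifs with hc
    · exact numGeodesics_pos R ((B.reach u).trans (hc.1 ▸ (B.reach w).symm))
    · exact Nat.mul_pos (Nat.mul_pos (numGeodesics_pos R (B.reach u)) (numGeodesics_pos H hu))
        (numGeodesics_pos R (B.reach w))
  refine dist_numGeodesics_of_potential (regraft H R π σ) w
    {u | H.Reachable (anchor π σ u) (anchor π σ w)} (fun u => glueDist H R π σ u w)
    (fun u => glueNum H R π σ u w) ?_ ?_ ?_ ?_ ?_ hNrec u hreach
  · intro u hu x hx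
    rw [Set.mem_ofPred_eq] at hu ⊢
    rcases B.adj_iff.1 hx with hx | ⟨y, z, hyz, rfl, rfl⟩
    · rw [anchor_of_core (B.core _ _ hx)] at hu
      rw [anchor_of_core (B.core _ _ hx.symm)]
      exact hx.symm.reachable.trans hu
    · rw [B.anchor_slide] at hu ⊢
      rwa [← B.fib _ _ hyz]
  · by_cases hw : π w = w <;> simp [glueDist, SameBranch, hw]
  · by_cases hw : π w = w <;> simp [glueNum, SameBranch, hw, numGeodesics_self]
  · intro u hu huw
    have h := hpos u hu
    rw [hNrec u hu huw] at h
    obtain ⟨x, hx, -⟩ := Finset.exists_ne_zero_of_sum_ne_zero h.ne'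
    exact ⟨x, (Finset.mem_filter.1 hx).2⟩
  · intro u _ x hx
    rcases B.adj_iff.1 hx with hx | ⟨y, z, hyz, rfl, rfl⟩
    · simp only [B.glueDist_core (B.core _ _ hx), B.glueDist_core (B.core _ _ hx.symm)]
      have := adj_dist_le H (w := anchor π σ w) hx
      omega
    · simp only [B.glueDist_slide]
      rw [← B.fib _ _ hyz]
      split_ifs
      · exact adj_dist_le R hyz
      · have := adj_dist_le R (w := π y) hyz
        omega

end Branched

end Regraft

/-! ### Cycles of regrafted graphs -/

section Cycles

variable {V : Type*}

lemma exists_edge_of_isCycle {G : SimpleGraph V} {u : V} {c : G.Walk u u} (hc : c.IsCycle) :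
    ∃ x y, s(x, y) ∈ c.edges := by
  cases c with
  | nil => simp at hc
  | cons h p => exact ⟨_, _, by rw [Walk.edges_cons]; exact List.mem_cons_self⟩

lemma cycleEdgeSets_mono {G G' : SimpleGraph V} (h : G ≤ G') :
    cycleEdgeSets G ⊆ cycleEdgeSets G' := by
  rintro s ⟨u, c, hc, rfl⟩
  exact ⟨u, c.mapLe h, hc.mapLe h, by ext e; simp [Walk.mapLe]⟩

lemma subset_edgeSet_of_mem_cycleEdgeSets {G : SimpleGraph V} {s : Set (Sym2 V)}
    (hs : s ∈ cycleEdgeSets G) : s ⊆ G.edgeSet := by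
  obtain ⟨u, c, _, rfl⟩ := hs
  exact fun e he => c.edges_subset_edgeSet he

lemma mem_cycleEdgeSets_of_subset {G G' : SimpleGraph V} {s : Set (Sym2 V)}
    (hs : s ∈ cycleEdgeSets G) (h : s ⊆ G'.edgeSet) : s ∈ cycleEdgeSets G' := by
  obtain ⟨u, c, hc, rfl⟩ := hs
  exact ⟨u, c.transfer G' (fun e he => h he), hc.transfer _, by ext e; simp⟩

/-- The cyclomatic number of a cactus is its number of cycles: deleting an edge of a cycle destroys
that cycle only, so the formula reduces to the one for trees. -/
lemma ncard_cycleEdgeSets [Fintype V] (G : SimpleGraph V) (hG : G.Connected)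
    (hd : (cycleEdgeSets G).Pairwise Disjoint) :
    (cycleEdgeSets G).ncard + Fintype.card V = G.edgeSet.ncard + 1 := by
  induction hn : G.edgeSet.ncard using Nat.strong_induction_on generalizing G with
  | _ n ih =>
    by_cases hac : G.IsAcyclic
    · have h0 : cycleEdgeSets G = ∅ := by
        ext s
        simp only [Set.mem_empty_iff_false, iff_false]
        rintro ⟨u, c, hc, _⟩
        exact hac c hc
      classical
      have h1 := IsTree.card_edgeFinset (G := G) ⟨hG, hac⟩
      have h2 : G.edgeSet.ncard = G.edgeFinset.card := by
        rw [← coe_edgeFinset, Set.ncard_coe_finset]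
      rw [h0, Set.ncard_empty]
      omega
    · obtain ⟨u, c, hc⟩ : ∃ (u : V) (c : G.Walk u u), c.IsCycle := by
        simpa [IsAcyclic] using hac
      obtain ⟨x, y, he⟩ := exists_edge_of_isCycle hc
      have heG : s(x, y) ∈ G.edgeSet := c.edges_subset_edgeSet he
      have hnb : ¬ G.IsBridge s(x, y) := fun hb => hb.notMem_edges_of_isCycle hc he
      have hconn := hG.connected_delete_edge_of_not_isBridge hnb
      have hcs : cycleEdgeSets (G.deleteEdges {s(x, y)}) =
          cycleEdgeSets G \ {{e | e ∈ c.edges}} := by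
        ext s
        constructor
        · intro hs
          refine ⟨cycleEdgeSets_mono (deleteEdges_le _) hs, ?_⟩
          rintro rfl
          have := subset_edgeSet_of_mem_cycleEdgeSets hs he
          simp at this
        · rintro ⟨hs, hne⟩
          refine mem_cycleEdgeSets_of_subset hs fun e hes => ?_
          rw [edgeSet_deleteEdges]
          refine ⟨subset_edgeSet_of_mem_cycleEdgeSets hs hes, ?_⟩
          rintro rfl
          exact Set.disjoint_left.1 (hd hs ⟨u, c, hc, rfl⟩ hne) hes he
      have hcard : (G.deleteEdges {s(x, y)}).edgeSet.ncard + 1 = n := by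
        rw [edgeSet_deleteEdges, Set.ncard_sdiff_singleton_add_one heG (Set.toFinite _), hn]
      have hrec := ih _ (by omega) _ hconn
        (by rw [hcs]; exact hd.mono Set.sdiff_subset) rfl
      have hcc : (cycleEdgeSets (G.deleteEdges {s(x, y)})).ncard + 1 =
          (cycleEdgeSets G).ncard := by
        rw [hcs]
        exact Set.ncard_sdiff_singleton_add_one ⟨u, c, hc, rfl⟩ (Set.toFinite _)
      omega

/-- A walk leaving `T` passes through `g`. -/
lemma gate_mem_support {G : SimpleGraph V} {T : Set V} {g : V}
    (hT : ∀ t ∈ T, ∀ x, G.Adj t x → x ∈ T ∨ x = g) {a b : V} (p : G.Walk a b)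
    (ha : a ∈ T) (hb : b ∉ T) : g ∈ p.support := by
  induction p with
  | nil => exact absurd ha hb
  | cons h p ih =>
    rw [Walk.support_cons]
    rcases hT _ ha _ h with h1 | rfl
    · exact List.mem_cons_of_mem _ (ih h1 hb)
    · exact List.mem_cons_of_mem _ p.start_mem_support

/-- A cycle meeting a vertex set `T` which can only be left through the vertex `g` stays in
`T ∪ {g}`, as it visits `g` at most once. -/
lemma cycle_subset_of_gate {G : SimpleGraph V} {T : Set V} {g : V} (hg : g ∉ T)
    (hT : ∀ t ∈ T, ∀ x, G.Adj t x → x ∈ T ∨ x = g) {u : V} {c : G.Walk u u} (hc : c.IsCycle)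
    {t : V} (ht : t ∈ T) (htc : t ∈ c.support) : ∀ z ∈ c.support, z ∈ T ∨ z = g := by
  classical
  intro z hz
  by_contra! hcon
  have hz' : z ∈ (c.rotate t htc).support := (c.mem_support_rotate_iff t htc).2 hz
  have hnd := (hc.rotate htc).support_nodup
  rw [← Walk.take_spec (c.rotate t htc) hz', Walk.tail_support_append,
    List.nodup_append'] at hnd
  have h1 := gate_mem_support hT ((c.rotate t htc).takeUntil z hz') ht hcon.1
  have h2 := gate_mem_support hT ((c.rotate t htc).dropUntil z hz').reverse ht hcon.1
  rw [Walk.support_reverse, List.mem_reverse] at h2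
  rw [Walk.mem_support_iff] at h1 h2
  rcases h1 with h1 | h1
  · exact hg (h1 ▸ ht)
  · rcases h2 with h2 | h2
    · exact hcon.2 h2.symm
    · exact hnd.2.2 h1 h2

namespace Branched

variable {H R : SimpleGraph V} {π σ : V → V} (B : Branched H R π σ)
include B

lemma edgeSet_regraft : (regraft H R π σ).edgeSet =
    H.edgeSet ∪ Sym2.map (slide π σ) '' R.edgeSet := by
  ext e
  induction e using Sym2.ind with
  | _ a b =>
    simp only [mem_edgeSet, B.adj_iff, Set.mem_union, Set.mem_image]
    refine or_congr_right ?_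
    constructor
    · rintro ⟨x, y, h, rfl, rfl⟩
      exact ⟨s(x, y), h, rfl⟩
    · rintro ⟨e, he, hab⟩
      induction e using Sym2.ind with
      | _ x y =>
        rw [Sym2.map_mk, Sym2.eq_iff] at hab
        rcases hab with ⟨hx, hy⟩ | ⟨hx, hy⟩
        · exact ⟨x, y, he, hx, hy⟩
        · exact ⟨y, x, (mem_edgeSet R).1 he |>.symm, hy, hx⟩

lemma eq_of_slide_eq {x y : V} (hx : π x ≠ x) (h : slide π σ x = slide π σ y) : x = y := by
  rw [slide_of_not_core hx] at h
  by_cases hy : π y = y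
  · rw [slide_of_core hy] at h
    exact absurd (h ▸ B.maps y hy) hx
  · rwa [slide_of_not_core hy] at h

lemma exists_not_core {e : Sym2 V} (he : e ∈ R.edgeSet) :
    ∃ x y, e = s(x, y) ∧ R.Adj x y ∧ π x ≠ x := by
  induction e using Sym2.ind with
  | _ x y =>
    by_cases hx : π x = x
    · exact ⟨y, x, Sym2.eq_swap, R.symm.symm _ _ he, B.not_core_of_adj he hx⟩
    · exact ⟨x, y, rfl, he, hx⟩

lemma injOn_edges : Set.InjOn (Sym2.map (slide π σ)) R.edgeSet := by
  intro e he e' he' h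
  obtain ⟨x, y, rfl, hxy, hx⟩ := B.exists_not_core he
  induction e' using Sym2.ind with
  | _ a b =>
    rw [Sym2.map_mk, Sym2.map_mk, Sym2.eq_iff] at h
    have hab : R.Adj a b := he'
    rcases h with ⟨h1, h2⟩ | ⟨h1, h2⟩
    · obtain rfl := B.eq_of_slide_eq hx h1
      obtain rfl := B.slide_inj (by rw [← B.fib _ _ hxy, ← B.fib _ _ hab]) h2
      rfl
    · obtain rfl := B.eq_of_slide_eq hx h1
      obtain rfl := B.slide_inj (by rw [← B.fib _ _ hxy, B.fib _ _ hab]) h2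
      exact Sym2.eq_swap

lemma disjoint_edges : Disjoint H.edgeSet (Sym2.map (slide π σ) '' R.edgeSet) := by
  rw [Set.disjoint_left]
  rintro _ heH ⟨e, he, rfl⟩
  obtain ⟨x, y, rfl, hxy, hx⟩ := B.exists_not_core he
  rw [Sym2.map_mk, mem_edgeSet, slide_of_not_core hx] at heH
  exact hx (B.core _ _ heH)

lemma ncard_edgeSet_regraft [Fintype V] :
    (regraft H R π σ).edgeSet.ncard = H.edgeSet.ncard + R.edgeSet.ncard := by
  rw [B.edgeSet_regraft, Set.ncard_union_eq B.disjoint_edges (Set.toFinite _) (Set.toFinite _),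
    B.injOn_edges.ncard_image]

/-- Every cycle of a regrafted graph is a cycle of the core or the image of a cycle of a branch. -/
lemma cycle_cases {s : Set (Sym2 V)} (hs : s ∈ cycleEdgeSets (regraft H R π σ)) :
    s ∈ cycleEdgeSets H ∨ ∃ s' ∈ cycleEdgeSets R, s = Sym2.map (slide π σ) '' s' := by
  classical
  obtain ⟨u, c, hc, rfl⟩ := hs
  by_cases hcore : ∀ v ∈ c.support, π v = v
  · left
    refine mem_cycleEdgeSets_of_subset ⟨u, c, hc, rfl⟩ fun e he => ?_
    have heG := c.edges_subset_edgeSet he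
    rw [B.edgeSet_regraft] at heG
    rcases heG with heG | ⟨e', he', rfl⟩
    · exact heG
    · exfalso
      obtain ⟨x, y, rfl, hxy, hx⟩ := B.exists_not_core he'
      rw [Set.mem_ofPred_eq, Sym2.map_mk, slide_of_not_core hx] at he
      exact hx (hcore x (Walk.fst_mem_support_of_mem_edges c he))
  · right
    push Not at hcore
    obtain ⟨t, htc, ht⟩ := hcore
    obtain ⟨i, hi⟩ : ∃ i, i = π t := ⟨_, rfl⟩
    have hic : π i = i := by rw [hi, B.idem]
    have hσ : π (σ i) = σ i := B.maps i hic
    have hR : ∀ a, π a = i → π a ≠ a → ∀ b, (regraft H R π σ).Adj a b →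
        ∃ y, R.Adj a y ∧ slide π σ y = b ∧ π y = i := by
      intro a ha hna b hab
      rcases B.adj_iff.1 hab with hab | ⟨x, y, hxy, hx, hy⟩
      · exact absurd (B.core _ _ hab) hna
      · have : a = x := B.eq_of_slide_eq (σ := σ) hna (by rw [slide_of_not_core hna, hx])
        subst this
        exact ⟨y, hxy, hy, by rw [← B.fib _ _ hxy, ha]⟩
    have hsub := cycle_subset_of_gate (T := {v | π v = i ∧ π v ≠ v}) (g := σ i)
      (fun h => h.2 hσ) (by
        rintro a ⟨ha, hna⟩ b hab
        obtain ⟨y, hay, rfl, hy⟩ := hR a ha hna b hab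
        by_cases hyc : π y = y
        · right
          rw [slide_of_core hyc, ← hyc, hy]
        · left
          rw [slide_of_not_core hyc]
          exact ⟨hy, hyc⟩) hc ⟨hi.symm, ht⟩ htc
    -- On this branch the regrafting is undone by exchanging `i` and `σ i`.
    obtain ⟨τ, hτ⟩ : ∃ τ : Equiv.Perm V, τ = Equiv.swap i (σ i) := ⟨_, rfl⟩
    have hτi : τ (σ i) = i := by rw [hτ, Equiv.swap_apply_right]
    have hτn : ∀ v, π v ≠ v → τ v = v := by
      intro v hv
      rw [hτ]
      refine Equiv.swap_apply_of_ne_of_ne ?_ ?_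
      · rintro rfl; exact hv hic
      · rintro rfl; exact hv hσ
    have hback : ∀ y, π y = i → τ (slide π σ y) = y := by
      intro y hy
      by_cases hyc : π y = y
      · rw [slide_of_core hyc, ← hyc, hy, hτi]
      · rw [slide_of_not_core hyc, hτn y hyc]
    have hedge : ∀ e ∈ c.edges, Sym2.map τ e ∈ R.edgeSet ∧
        Sym2.map (slide π σ) (Sym2.map τ e) = e := by
      have key : ∀ a b, s(a, b) ∈ c.edges → π a = i → π a ≠ a →
          R.Adj (τ a) (τ b) ∧ slide π σ (τ a) = a ∧ slide π σ (τ b) = b := by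
        intro a b hab ha hna
        obtain ⟨y, hay, rfl, hy⟩ := hR a ha hna b (c.adj_of_mem_edges hab)
        rw [hback y hy, hτn a hna]
        exact ⟨hay, slide_of_not_core hna, rfl⟩
      intro e he
      induction e using Sym2.ind with
      | _ a b =>
        rw [Sym2.map_mk, Sym2.map_mk, mem_edgeSet]
        rcases hsub a (Walk.fst_mem_support_of_mem_edges c he) with ⟨ha, hna⟩ | ha
        · obtain ⟨h1, h2, h3⟩ := key a b he ha hna
          exact ⟨h1, by rw [h2, h3]⟩
        · rcases hsub b (Walk.snd_mem_support_of_mem_edges c he) with ⟨hb, hnb⟩ | hb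
          · obtain ⟨h1, h2, h3⟩ := key b a (Sym2.eq_swap ▸ he) hb hnb
            exact ⟨h1.symm, by rw [h2, h3]⟩
          · exact absurd (ha.trans hb.symm) (c.adj_of_mem_edges he).ne
    let f : R.comap τ →g R := ⟨τ, fun h => h⟩
    have htr : ∀ e ∈ c.edges, e ∈ (R.comap τ).edgeSet := by
      intro e he
      have := (hedge e he).1
      induction e using Sym2.ind with
      | _ a b => exact this
    refine ⟨_, ⟨_, (c.transfer _ htr).map f, (hc.transfer htr).map τ.injective, rfl⟩, ?_⟩
    ext e
    simp only [Walk.edges_map, Walk.edges_transfer, List.mem_map, Set.mem_image,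
      Set.mem_ofPred_eq, exists_exists_and_eq_and]
    constructor
    · exact fun he => ⟨e, he, (hedge e he).2⟩
    · rintro ⟨e', he', rfl⟩
      have h := (hedge e' he').2
      rw [show Sym2.map f e' = Sym2.map τ e' from rfl, h]
      exact he'

lemma pairwise_disjoint_regraft (hH : (cycleEdgeSets H).Pairwise Disjoint)
    (hR : (cycleEdgeSets R).Pairwise Disjoint) :
    (cycleEdgeSets (regraft H R π σ)).Pairwise Disjoint := by
  intro s hs s' hs' hne
  rcases B.cycle_cases hs with h | ⟨t, ht, rfl⟩ <;>
    rcases B.cycle_cases hs' with h' | ⟨t', ht', rfl⟩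
  · exact hH h h' hne
  · exact B.disjoint_edges.mono (subset_edgeSet_of_mem_cycleEdgeSets h)
      (Set.image_mono (subset_edgeSet_of_mem_cycleEdgeSets ht'))
  · exact (B.disjoint_edges.mono (subset_edgeSet_of_mem_cycleEdgeSets h')
      (Set.image_mono (subset_edgeSet_of_mem_cycleEdgeSets ht))).symm
  · rw [Set.disjoint_left]
    rintro _ ⟨e, he, rfl⟩ ⟨e', he', h⟩
    obtain rfl := B.injOn_edges (subset_edgeSet_of_mem_cycleEdgeSets ht' he')
      (subset_edgeSet_of_mem_cycleEdgeSets ht he) h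
    exact Set.disjoint_left.1 (hR ht ht' (by rintro rfl; exact hne rfl)) he he'

lemma connected_regraft [Fintype V] [Nonempty V]
    (hH : ∀ a b, π a = a → π b = b → H.Reachable a b) : (regraft H R π σ).Connected := by
  have ha : ∀ u, π (anchor π σ u) = anchor π σ u := by
    intro u
    by_cases hu : π u = u
    · rw [anchor_of_core hu, hu]
    · rw [anchor_of_not_core hu, B.maps _ (B.idem u)]
  exact (connected_iff _).2
    ⟨fun u w => (B.regraft_geodesics (hH _ _ (ha u) (ha w))).1, inferInstance⟩

end Branched

end Cycles

/-! ### Cycle graphs -/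

section CycleGraph

open scoped Classical

variable {V : Type*}

/-- The graph whose edges join consecutive terms of the sequence `v`. -/
def cyc (v : ℕ → V) : SimpleGraph V where
  Adj x y := x ≠ y ∧ ∃ i, s(x, y) = s(v i, v (i + 1))
  symm := ⟨fun x y ⟨h, i, hi⟩ => ⟨h.symm, i, by rw [Sym2.eq_swap, hi]⟩⟩
  loopless := ⟨fun x h => h.1 rfl⟩

/-- The sequence `v` runs through a cycle of length `g` over and over again: its terms are equal exactly
when their indices agree modulo `g`. -/
structure IsCyc (v : ℕ → V) (g : ℕ) : Prop where
  three_le : 3 ≤ g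
  eq_iff : ∀ i j, v i = v j ↔ i ≡ j [MOD g]

namespace IsCyc

variable {v : ℕ → V} {g : ℕ} (h : IsCyc v g)
include h

lemma pos : 0 < g := by have := h.three_le; omega

lemma inj {i j : ℕ} (hi : i < g) (hj : j < g) (hij : v i = v j) : i = j :=
  Nat.ModEq.eq_of_lt_of_lt ((h.eq_iff i j).1 hij) hi hj

lemma map_mod (i : ℕ) : v (i % g) = v i := (h.eq_iff _ _).2 (Nat.mod_modEq i g)

lemma map_add (i : ℕ) : v (i + g) = v i := (h.eq_iff _ _).2 (by simp [Nat.ModEq])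

lemma exists_lt (i : ℕ) : ∃ t < g, v t = v i := ⟨i % g, Nat.mod_lt _ h.pos, h.map_mod i⟩

lemma shift (b : ℕ) : IsCyc (fun t => v (b + t)) g :=
  ⟨h.three_le, fun _ _ => (h.eq_iff _ _).trans ⟨fun hh => Nat.ModEq.add_left_cancel' b hh,
    fun hh => Nat.ModEq.add_left b hh⟩⟩

/-- Every vertex of the cycle is a term of the shifted sequence. -/
lemma exists_shift (b i : ℕ) : ∃ t, t < g ∧ v (b + t) = v i := by
  obtain ⟨t, ht, hti⟩ := (h.shift b).exists_lt (i + (g - 1) * b)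
  refine ⟨t, ht, ?_⟩
  refine hti.trans ((h.eq_iff _ _).2 ?_)
  have hg : b + (i + (g - 1) * b) = i + g * b := by
    obtain ⟨k, rfl⟩ := Nat.exists_eq_succ_of_ne_zero h.pos.ne'
    simp only [Nat.succ_eq_add_one, Nat.add_sub_cancel]
    ring
  rw [hg]
  simp [Nat.ModEq]

lemma ne_succ (i : ℕ) : v i ≠ v (i + 1) := by
  intro hh
  have h1 := (h.eq_iff _ _).1 hh
  have h2 : 0 ≡ 1 [MOD g] := Nat.ModEq.add_left_cancel' i h1
  have := h.three_le
  have := Nat.ModEq.eq_of_lt_of_lt h2 (by omega) (by omega)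
  omega

lemma adj_succ (i : ℕ) : (cyc v).Adj (v i) (v (i + 1)) := ⟨h.ne_succ i, i, rfl⟩

lemma pred_succ (i : ℕ) : v (i + (g - 1) + 1) = v i := by
  have := h.three_le
  rw [show i + (g - 1) + 1 = i + g by omega, h.map_add]

lemma adj_pred (i : ℕ) : (cyc v).Adj (v i) (v (i + (g - 1))) := by
  have h1 := h.adj_succ (i + (g - 1))
  rw [h.pred_succ] at h1
  exact h1.symm

lemma succ_congr {i j : ℕ} (hij : v i = v j) : v (i + 1) = v (j + 1) :=
  (h.eq_iff _ _).2 (Nat.ModEq.add_right 1 ((h.eq_iff _ _).1 hij))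

lemma adj_iff {t : ℕ} {x : V} :
    (cyc v).Adj (v t) x ↔ x = v (t + 1) ∨ x = v (t + (g - 1)) := by
  constructor
  · rintro ⟨_, i, hi⟩
    rcases Sym2.eq_iff.1 hi with ⟨h1, h2⟩ | ⟨h1, h2⟩
    · left; rw [h2]; exact (h.succ_congr h1).symm
    · right
      rw [h2, h.eq_iff]
      have h3 : t ≡ i + 1 [MOD g] := (h.eq_iff _ _).1 h1
      have h4 := h3.add_right (g - 1)
      have := h.three_le
      rw [show i + 1 + (g - 1) = i + g by omega] at h4
      exact (h4.trans (by simp [Nat.ModEq])).symm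
  · rintro (rfl | rfl)
    · exact h.adj_succ t
    · exact h.adj_pred t

omit h in
lemma mem_range_of_adj {x y : V} (hxy : (cyc v).Adj x y) : ∃ i, v i = x := by
  obtain ⟨_, i, hi⟩ := hxy
  rcases Sym2.eq_iff.1 hi with ⟨h1, _⟩ | ⟨h1, _⟩
  · exact ⟨i, h1.symm⟩
  · exact ⟨i + 1, h1.symm⟩

lemma cyc_shift (b : ℕ) : cyc (fun t => v (b + t)) = cyc v := by
  ext x y
  constructor
  · rintro ⟨hne, i, hi⟩
    exact ⟨hne, b + i, hi⟩
  · rintro ⟨hne, i, hi⟩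
    obtain ⟨t, _, ht⟩ := h.exists_shift b i
    exact ⟨hne, t, by rw [hi, ← ht, ← h.succ_congr ht]; rfl⟩

/-- The case of `geodesics` where the second vertex is `v 0`; the distance to it is `min t (g - t)`. -/
lemma geodesics_zero [Fintype V] {t : ℕ} (ht : t < g) : (cyc v).Reachable (v t) (v 0) ∧
    numGeodesics (cyc v) (v t) (v 0) = if 2 * t = g then 2 else 1 := by
  have h3 := h.three_le
  obtain ⟨idx, hidx⟩ : ∃ idx : V → ℕ, ∀ t < g, idx (v t) = t := by
    refine ⟨fun x => if hx : ∃ t < g, v t = x then hx.choose else 0, fun t ht => ?_⟩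
    have hx : ∃ s < g, v s = v t := ⟨t, ht, rfl⟩
    simp only [dif_pos hx]
    exact h.inj hx.choose_spec.1 ht hx.choose_spec.2
  have hlast : v (g - 1 + 1) = v 0 := by
    have := h.pred_succ 0
    simpa using this
  have hpred : ∀ t, 0 < t → v (t + (g - 1)) = v (t - 1) := by
    intro t ht0
    rw [show t + (g - 1) = t - 1 + g by omega, h.map_add]
  have hpred0 : v (0 + (g - 1)) = v (g - 1) := by rw [zero_add]
  -- the neighbours of a vertex in terms of indices
  have hnb : ∀ t < g, ∀ x, (cyc v).Adj (v t) x →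
      ∃ s < g, x = v s ∧ (s = t + 1 ∨ t = s + 1 ∨ (s = 0 ∧ t = g - 1) ∨ (t = 0 ∧ s = g - 1)) := by
    intro t ht x hx
    rcases h.adj_iff.1 hx with rfl | rfl
    · by_cases htg : t + 1 < g
      · exact ⟨t + 1, htg, rfl, Or.inl rfl⟩
      · obtain rfl : t = g - 1 := by omega
        exact ⟨0, by omega, hlast, by omega⟩
    · by_cases ht0 : 0 < t
      · exact ⟨t - 1, by omega, hpred t ht0, by omega⟩
      · obtain rfl : t = 0 := by omega
        exact ⟨g - 1, by omega, hpred0, by omega⟩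
  have key := dist_numGeodesics_of_potential (cyc v) (v 0) (Set.range v)
    (fun x => min (idx x) (g - idx x)) (fun x => if 2 * idx x = g then 2 else 1)
    ?_ ?_ ?_ ?_ ?_ ?_ (v t) ⟨t, rfl⟩
  · refine ⟨key.1, ?_⟩
    rw [key.2.2, hidx t ht]
  · intro u _ x hx
    exact mem_range_of_adj hx.symm
  · simp [hidx 0 h.pos]
  · rw [hidx 0 h.pos, if_neg (by omega)]
  · rintro _ ⟨i, rfl⟩ hne
    obtain ⟨t, ht, hti⟩ := h.exists_lt i
    rw [← hti] at hne ⊢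
    have ht0 : 0 < t := Nat.pos_of_ne_zero (by rintro rfl; exact hne rfl)
    by_cases h2 : 2 * t ≤ g
    · refine ⟨v (t - 1), h.adj_iff.2 (Or.inr (hpred t ht0).symm), ?_⟩
      simp only [hidx t ht, hidx (t - 1) (by omega)]
      omega
    · refine ⟨v (t + 1), h.adj_iff.2 (Or.inl rfl), ?_⟩
      by_cases htg : t + 1 < g
      · simp only [hidx t ht, hidx (t + 1) htg]
        omega
      · obtain rfl : t = g - 1 := by omega
        rw [hlast]
        simp only [hidx _ ht, hidx 0 h.pos]
        omega
  · rintro _ ⟨i, rfl⟩ x hx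
    obtain ⟨t, ht, hti⟩ := h.exists_lt i
    rw [← hti] at hx ⊢
    obtain ⟨s, hs, rfl, hst⟩ := hnb t ht x hx
    simp only [hidx t ht, hidx s hs]
    omega
  · rintro _ ⟨i, rfl⟩ hne
    obtain ⟨t, ht, hti⟩ := h.exists_lt i
    rw [← hti] at hne ⊢
    have ht0 : 0 < t := Nat.pos_of_ne_zero (by rintro rfl; exact hne rfl)
    have hmem : ∀ x, x ∈ Finset.univ.filter (fun x => (cyc v).Adj (v t) x ∧
        min (idx x) (g - idx x) + 1 = min (idx (v t)) (g - idx (v t))) ↔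
        (2 * t ≤ g ∧ x = v (t - 1)) ∨ (g ≤ 2 * t ∧ x = v ((t + 1) % g)) := by
      intro x
      simp only [Finset.mem_filter, Finset.mem_univ, true_and, hidx t ht]
      rw [h.map_mod]
      constructor
      · rintro ⟨hx, hd⟩
        obtain ⟨s, hs, rfl, hst⟩ := hnb t ht x hx
        rw [hidx s hs] at hd
        rcases hst with rfl | rfl | ⟨rfl, rfl⟩ | ⟨rfl, rfl⟩
        · exact Or.inr ⟨by omega, rfl⟩
        · exact Or.inl ⟨by omega, rfl⟩
        · exact Or.inr ⟨by omega, hlast.symm⟩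
        · omega
      · rintro (⟨h2, rfl⟩ | ⟨h2, rfl⟩)
        · refine ⟨h.adj_iff.2 (Or.inr (hpred t ht0).symm), ?_⟩
          rw [hidx (t - 1) (by omega)]
          omega
        · refine ⟨h.adj_iff.2 (Or.inl rfl), ?_⟩
          by_cases htg : t + 1 < g
          · rw [hidx (t + 1) htg]
            omega
          · obtain rfl : t = g - 1 := by omega
            rw [hlast, hidx 0 h.pos]
            omega
    have hm1 : idx (v (t - 1)) = t - 1 := hidx _ (by omega)
    have hm2 : idx (v ((t + 1) % g)) = (t + 1) % g := hidx _ (Nat.mod_lt _ h.pos)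
    have hmod : (t + 1) % g = if t + 1 < g then t + 1 else 0 := by
      split_ifs with hlt
      · exact Nat.mod_eq_of_lt hlt
      · rw [show t + 1 = g by omega, Nat.mod_self]
    rcases lt_trichotomy (2 * t) g with h2 | h2 | h2
    · have hS : Finset.univ.filter (fun x => (cyc v).Adj (v t) x ∧
          min (idx x) (g - idx x) + 1 = min (idx (v t)) (g - idx (v t))) = {v (t - 1)} := by
        ext x; rw [hmem, Finset.mem_singleton]; constructor
        · rintro (⟨_, hx⟩ | ⟨h2', _⟩)
          · exact hx
          · omega
        · exact fun hx => Or.inl ⟨h2.le, hx⟩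
      rw [hS, Finset.sum_singleton, hm1, hidx t ht, if_neg (by omega), if_neg (by omega)]
    · have hS : Finset.univ.filter (fun x => (cyc v).Adj (v t) x ∧
          min (idx x) (g - idx x) + 1 = min (idx (v t)) (g - idx (v t))) =
          {v (t - 1), v ((t + 1) % g)} := by
        ext x; rw [hmem, Finset.mem_insert, Finset.mem_singleton]
        simp only [h2, le_refl, true_and]
      rw [hS, Finset.sum_pair, hm1, hm2, hidx t ht, if_pos h2, if_neg (by omega), if_neg (by rw [hmod]; split_ifs <;> omega)]
      · intro he
        have := h.inj (by omega) (Nat.mod_lt _ h.pos) he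
        rw [hmod] at this
        split_ifs at this <;> omega
    · have hS : Finset.univ.filter (fun x => (cyc v).Adj (v t) x ∧
          min (idx x) (g - idx x) + 1 = min (idx (v t)) (g - idx (v t))) =
          {v ((t + 1) % g)} := by
        ext x; rw [hmem, Finset.mem_singleton]; constructor
        · rintro (⟨h2', _⟩ | ⟨_, hx⟩)
          · omega
          · exact hx
        · exact fun hx => Or.inr ⟨h2.le, hx⟩
      rw [hS, Finset.sum_singleton, hm2, hidx t ht, if_neg (by omega),
        if_neg (by rw [hmod]; split_ifs <;> omega)]

/-- On a cycle every two vertices are joined by a single geodesic, unless they are antipodal, in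
which case there are two. -/
lemma geodesics [Fintype V] (b : ℕ) {t : ℕ} (ht : t < g) :
    (cyc v).Reachable (v (b + t)) (v b) ∧
    numGeodesics (cyc v) (v (b + t)) (v b) = if 2 * t = g then 2 else 1 := by
  have := (h.shift b).geodesics_zero ht
  rwa [h.cyc_shift] at this

lemma reachable [Fintype V] (i j : ℕ) : (cyc v).Reachable (v i) (v j) := by
  obtain ⟨t, ht, hti⟩ := h.exists_shift j i
  exact hti ▸ (h.geodesics j ht).1

lemma edgeSet_eq : (cyc v).edgeSet =
    ((Finset.range g).image fun i => s(v i, v (i + 1)) : Finset (Sym2 V)) := by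
  ext e
  induction e using Sym2.ind with
  | _ x y =>
    simp only [mem_edgeSet, Finset.coe_image, Set.mem_image, Finset.coe_range, Set.mem_Iio]
    constructor
    · rintro ⟨_, i, hi⟩
      obtain ⟨t, ht, hti⟩ := h.exists_lt i
      exact ⟨t, ht, by rw [hi, hti, h.succ_congr hti]⟩
    · rintro ⟨i, _, hi⟩
      refine ⟨?_, i, hi.symm⟩
      rintro rfl
      have := h.ne_succ i
      rcases Sym2.eq_iff.1 hi with ⟨h1, h2⟩ | ⟨h1, h2⟩ <;> exact this (h1.trans h2.symm)

lemma ncard_edgeSet : (cyc v).edgeSet.ncard = g := by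
  rw [h.edgeSet_eq, Set.ncard_coe_finset, Finset.card_image_of_injOn, Finset.card_range]
  intro i hi j hj hij
  simp only [Finset.coe_range, Set.mem_Iio] at hi hj
  have h3 := h.three_le
  rcases Sym2.eq_iff.1 hij with ⟨h1, _⟩ | ⟨h1, h2⟩
  · exact h.inj hi hj h1
  · exfalso
    have h4 := (h.eq_iff _ _).1 h1
    have h5 := (h.eq_iff _ _).1 h2
    have h6 : j + 2 ≡ j + 0 [MOD g] := (h4.add_right 1).symm.trans h5
    have h7 := Nat.ModEq.eq_of_lt_of_lt (Nat.ModEq.add_left_cancel' j h6)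
      (by omega) (by omega)
    omega

/-- A cycle graph contains only one cycle. -/
lemma eq_edgeSet_of_mem {s : Set (Sym2 V)} (hs : s ∈ cycleEdgeSets (cyc v)) :
    s = (cyc v).edgeSet := by
  obtain ⟨u, c, hc, rfl⟩ := hs
  refine Set.Subset.antisymm (fun e he => c.edges_subset_edgeSet he) ?_
  -- both edges of the cycle graph at a vertex of `c` belong to `c`
  have hstep : ∀ t, v t ∈ c.support → ∀ x, (cyc v).Adj (v t) x → s(v t, x) ∈ c.edges := by
    intro t ht x hx
    have h2 := hc.ncard_neighborSet_toSubgraph_eq_two ht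
    have hsub : c.toSubgraph.neighborSet (v t) ⊆ {v (t + 1), v (t + (g - 1))} := by
      intro y hy
      have hy' : (cyc v).Adj (v t) y := c.toSubgraph.adj_sub hy
      exact h.adj_iff.1 hy'
    have hle : ({v (t + 1), v (t + (g - 1))} : Set V).ncard ≤ 2 := (Set.ncard_insert_le _ _).trans (by rw [Set.ncard_singleton])
    have heq := Set.eq_of_subset_of_ncard_le hsub (by omega) (Set.toFinite _)
    have hxm : x ∈ c.toSubgraph.neighborSet (v t) := by rw [heq]; exact h.adj_iff.1 hx
    exact Walk.mem_edges_toSubgraph _ |>.1 hxm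
  have hall : ∀ i, v i ∈ c.support := by
    obtain ⟨x, y, hxy⟩ := exists_edge_of_isCycle hc
    obtain ⟨b, rfl⟩ := mem_range_of_adj (c.adj_of_mem_edges hxy)
    have hb : ∀ t, v (b + t) ∈ c.support := by
      intro t
      induction t with
      | zero => exact c.fst_mem_support_of_mem_edges hxy
      | succ t ih =>
        exact c.snd_mem_support_of_mem_edges (hstep _ ih _ (h.adj_succ _))
    intro i
    obtain ⟨t, _, ht⟩ := h.exists_shift b i
    exact ht ▸ hb t
  intro e he
  induction e using Sym2.ind with
  | _ x y =>
    obtain ⟨i, rfl⟩ := mem_range_of_adj he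
    exact hstep i (hall i) y he

lemma pairwise_disjoint : (cycleEdgeSets (cyc v)).Pairwise Disjoint := by
  intro s hs s' hs' hne
  exact absurd ((h.eq_edgeSet_of_mem hs).trans (h.eq_edgeSet_of_mem hs').symm) hne

end IsCyc

end CycleGraph

/-! ### Comparing two regrafted graphs -/

section Compare

open scoped Classical

variable {V : Type*} [Fintype V]

/-- A sum over all ordered pairs is split into pairs of core vertices, mixed pairs in either order, and
pairs of branch vertices, for `p` the property of being a core vertex. -/
lemma sum_split (p : V → Prop) (f : V → V → ℕ) : ∑ u, ∑ w, f u w =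
    (∑ u with p u, ∑ w with p w, f u w) + (∑ w with ¬ p w, ∑ u with p u, f u w) +
    (∑ u with ¬ p u, ∑ w with p w, f u w) + (∑ u with ¬ p u, ∑ w with ¬ p w, f u w) := by
  have h1 : ∀ u, ∑ w, f u w = ∑ w with p w, f u w + ∑ w with ¬ p w, f u w :=
    fun u => (Finset.sum_filter_add_sum_filter_not _ _ _).symm
  simp only [h1]
  rw [← Finset.sum_filter_add_sum_filter_not Finset.univ p, Finset.sum_add_distrib,
    Finset.sum_add_distrib, Finset.sum_comm (s := Finset.univ.filter p)
      (t := Finset.univ.filter fun w => ¬ p w)]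
  ring

/-- Replacing the core `H₁` by `H₂` and moving the branches along `σ` increases the number of
geodesics if no pair of core vertices, no pair of branch roots and, in total, no pair consisting of
a branch root and a core vertex loses geodesics, and some pair gains. -/
lemma totalGeodesics_lt {H₁ H₂ R : SimpleGraph V} {π σ : V → V}
    (B₁ : Branched H₁ R π id) (B₂ : Branched H₂ R π σ)
    (hr₁ : ∀ a b, π a = a → π b = b → H₁.Reachable a b)
    (hr₂ : ∀ a b, π a = a → π b = b → H₂.Reachable a b)
    (hroots : ∀ i j, π i = i → π j = j →
      numGeodesics H₁ i j ≤ numGeodesics H₂ (σ i) (σ j))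
    (hmixed : ∀ i, π i = i → ∑ j with π j = j, numGeodesics H₁ i j ≤
      ∑ j with π j = j, numGeodesics H₂ (σ i) j)
    (hcore : ∀ i j, π i = i → π j = j → numGeodesics H₁ i j ≤ numGeodesics H₂ i j)
    (hlt : (∃ i j, π i = i ∧ π j = j ∧ numGeodesics H₁ i j < numGeodesics H₂ i j) ∨
      ∃ u w, π u ≠ u ∧ π w ≠ w ∧ π u ≠ π w ∧
        numGeodesics H₁ (π u) (π w) < numGeodesics H₂ (σ (π u)) (σ (π w))) :
    totalGeodesics (regraft H₁ R π id) < totalGeodesics (regraft H₂ R π σ) := by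
  have hanchor : ∀ {H : SimpleGraph V} {τ : V → V}, Branched H R π τ → ∀ u,
      π (anchor π τ u) = anchor π τ u := by
    intro H τ B u
    by_cases hu : π u = u
    · rw [anchor_of_core hu, hu]
    · rw [anchor_of_not_core hu, B.maps _ (B.idem u)]
  have e₁ : ∀ u w, numGeodesics (regraft H₁ R π id) u w = glueNum H₁ R π id u w :=
    fun u w => (B₁.regraft_geodesics (hr₁ _ _ (hanchor B₁ u) (hanchor B₁ w))).2.2
  have e₂ : ∀ u w, numGeodesics (regraft H₂ R π σ) u w = glueNum H₂ R π σ u w :=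
    fun u w => (B₂.regraft_geodesics (hr₂ _ _ (hanchor B₂ u) (hanchor B₂ w))).2.2
  have hcc : ∀ {H : SimpleGraph V} {τ : V → V} {i j}, π i = i → π j = j →
      glueNum H R π τ i j = numGeodesics H i j := by
    intro H τ i j hi hj
    rw [glueNum, if_neg (fun hs => hs.2.1 hi), anchor_of_core hi, anchor_of_core hj, hi, hj,
      numGeodesics_self, numGeodesics_self, one_mul, mul_one]
  have hnc : ∀ {H : SimpleGraph V} {τ : V → V} {u j}, π u ≠ u → π j = j →
      glueNum H R π τ u j = numGeodesics R u (π u) * numGeodesics H (τ (π u)) j := by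
    intro H τ i j hi hj
    rw [glueNum, if_neg (fun hs => hs.2.2 hj), anchor_of_not_core hi, anchor_of_core hj, hj,
      numGeodesics_self, mul_one]
  have hpos : ∀ u, 0 < numGeodesics R u (π u) := fun u => numGeodesics_pos R (B₁.reach u)
  have hNC : ∀ u, π u ≠ u → ∑ j with π j = j, numGeodesics (regraft H₁ R π id) u j ≤
      ∑ j with π j = j, numGeodesics (regraft H₂ R π σ) u j := by
    intro u hu
    rw [Finset.sum_congr rfl (fun j hj => (e₁ u j).trans (hnc hu (by simpa using hj))),
      Finset.sum_congr rfl (fun j hj => (e₂ u j).trans (hnc hu (by simpa using hj))),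
      ← Finset.mul_sum, ← Finset.mul_sum]
    exact Nat.mul_le_mul_left _ (hmixed _ (B₁.idem u))
  have hCC : ∀ i j, π i = i → π j = j → numGeodesics (regraft H₁ R π id) i j ≤
      numGeodesics (regraft H₂ R π σ) i j := by
    intro i j hi hj
    rw [e₁, e₂, hcc hi hj, hcc hi hj]
    exact hcore i j hi hj
  have hNN : ∀ u w, π u ≠ u → π w ≠ w → numGeodesics (regraft H₁ R π id) u w ≤
      numGeodesics (regraft H₂ R π σ) u w := by
    intro u w hu hw
    rw [e₁, e₂, glueNum, glueNum]
    split_ifs with hs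
    · exact le_rfl
    · rw [anchor_of_not_core hu, anchor_of_not_core hw, anchor_of_not_core hu,
        anchor_of_not_core hw]
      exact Nat.mul_le_mul_right _ (Nat.mul_le_mul_left _
        (hroots _ _ (B₁.idem u) (B₁.idem w)))
  rw [totalGeodesics, totalGeodesics, sum_split (fun u => π u = u),
    sum_split (fun u => π u = u) (numGeodesics (regraft H₂ R π σ))]
  have s1 : ∑ u with π u = u, ∑ w with π w = w, numGeodesics (regraft H₁ R π id) u w ≤
      ∑ u with π u = u, ∑ w with π w = w, numGeodesics (regraft H₂ R π σ) u w :=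
    Finset.sum_le_sum fun u hu => Finset.sum_le_sum fun w hw =>
      hCC u w (by simpa using hu) (by simpa using hw)
  have s2 : ∑ u with ¬ π u = u, ∑ w with π w = w, numGeodesics (regraft H₁ R π id) u w ≤
      ∑ u with ¬ π u = u, ∑ w with π w = w, numGeodesics (regraft H₂ R π σ) u w :=
    Finset.sum_le_sum fun u hu => hNC u (by simpa using hu)
  have s3 : ∑ w with ¬ π w = w, ∑ u with π u = u, numGeodesics (regraft H₁ R π id) u w ≤
      ∑ w with ¬ π w = w, ∑ u with π u = u, numGeodesics (regraft H₂ R π σ) u w := by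
    refine Finset.sum_le_sum fun u hu => ?_
    have := hNC u (by simpa using hu)
    calc _ = _ := Finset.sum_congr rfl fun w _ => numGeodesics_comm _ w u
      _ ≤ _ := this
      _ = _ := Finset.sum_congr rfl fun w _ => numGeodesics_comm _ u w
  have s4 : ∑ u with ¬ π u = u, ∑ w with ¬ π w = w, numGeodesics (regraft H₁ R π id) u w ≤
      ∑ u with ¬ π u = u, ∑ w with ¬ π w = w, numGeodesics (regraft H₂ R π σ) u w :=
    Finset.sum_le_sum fun u hu => Finset.sum_le_sum fun w hw =>
      hNN u w (by simpa using hu) (by simpa using hw)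
  rcases hlt with ⟨i, j, hi, hj, hij⟩ | ⟨u, w, hu, hw, huw, hlt⟩
  · have : ∑ u with π u = u, ∑ w with π w = w, numGeodesics (regraft H₁ R π id) u w <
        ∑ u with π u = u, ∑ w with π w = w, numGeodesics (regraft H₂ R π σ) u w := by
      refine Finset.sum_lt_sum (fun u hu => Finset.sum_le_sum fun w hw =>
        hCC u w (by simpa using hu) (by simpa using hw)) ⟨i, by simpa using hi, ?_⟩
      refine Finset.sum_lt_sum (fun w hw => hCC i w hi (by simpa using hw))
        ⟨j, by simpa using hj, ?_⟩
      rwa [e₁, e₂, hcc hi hj, hcc hi hj]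
    omega
  · have : ∑ u with ¬ π u = u, ∑ w with ¬ π w = w, numGeodesics (regraft H₁ R π id) u w <
        ∑ u with ¬ π u = u, ∑ w with ¬ π w = w, numGeodesics (regraft H₂ R π σ) u w := by
      refine Finset.sum_lt_sum (fun u hu => Finset.sum_le_sum fun w hw =>
        hNN u w (by simpa using hu) (by simpa using hw)) ⟨u, by simpa using hu, ?_⟩
      refine Finset.sum_lt_sum (fun w hw => hNN u w hu (by simpa using hw))
        ⟨w, by simpa using hw, ?_⟩
      rw [e₁, e₂, glueNum, glueNum, if_neg (fun hs => huw hs.1), if_neg (fun hs => huw hs.1),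
        anchor_of_not_core hu, anchor_of_not_core hw, anchor_of_not_core hu,
        anchor_of_not_core hw]
      exact Nat.mul_lt_mul_of_pos_right (Nat.mul_lt_mul_of_pos_left hlt (hpos u)) (hpos w)
    omega

/-- Two regrafted graphs with the same branches and cores with the same number of edges: if the
first is a cactus then so is the second, with equally many cycles, provided the cycles of the second
core are edge-disjoint. -/
lemma isCactus_regraft [Nonempty V] {H₁ H₂ R : SimpleGraph V} {π σ : V → V}
    (B₁ : Branched H₁ R π id) (B₂ : Branched H₂ R π σ)
    (hr₂ : ∀ a b, π a = a → π b = b → H₂.Reachable a b)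
    (hG : IsCactus (regraft H₁ R π id)) (hR : (cycleEdgeSets R).Pairwise Disjoint)
    (hH₂ : (cycleEdgeSets H₂).Pairwise Disjoint)
    (hE : H₁.edgeSet.ncard = H₂.edgeSet.ncard) :
    IsCactus (regraft H₂ R π σ) ∧
      (cycleEdgeSets (regraft H₂ R π σ)).ncard = (cycleEdgeSets (regraft H₁ R π id)).ncard := by
  have h2 : IsCactus (regraft H₂ R π σ) :=
    ⟨B₂.connected_regraft hr₂, B₂.pairwise_disjoint_regraft hH₂ hR⟩
  refine ⟨h2, ?_⟩
  have k1 := ncard_cycleEdgeSets _ hG.1 hG.2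
  have k2 := ncard_cycleEdgeSets _ h2.1 h2.2
  rw [B₁.ncard_edgeSet_regraft] at k1
  rw [B₂.ncard_edgeSet_regraft] at k2
  omega

end Compare

/-! ### Decomposing a cactus along a cycle -/

section Decompose

open scoped Classical

variable {V : Type*} {G : SimpleGraph V}

/-- A closed walk along a cycle, continued periodically, is a sequence in the sense of `IsCyc`, with
the same edges and the same vertices. -/
lemma isCyc_of_isCycle {u : V} {c : G.Walk u u} (hc : c.IsCycle) :
    IsCyc (fun i => c.getVert (i % c.length)) c.length ∧
      (∀ e, e ∈ c.edges ↔ e ∈ (cyc (fun i => c.getVert (i % c.length))).edgeSet) ∧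
      ∀ x, x ∈ c.support ↔ ∃ i, c.getVert (i % c.length) = x := by
  have h3 := hc.three_le_length
  have hcyc : IsCyc (fun i => c.getVert (i % c.length)) c.length := by
    refine ⟨h3, fun i j => ⟨fun hij => ?_, fun hij => by rw [show i % c.length = j % c.length from hij]⟩⟩
    have hi := Nat.mod_lt i (by omega : c.length > 0)
    have hj := Nat.mod_lt j (by omega : c.length > 0)
    exact hc.getVert_injOn' (by rw [Set.mem_ofPred_eq]; omega) (by rw [Set.mem_ofPred_eq]; omega) hij
  have hle : ∀ i ≤ c.length, c.getVert (i % c.length) = c.getVert i := by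
    intro i hi
    rcases hi.lt_or_eq with h | rfl
    · rw [Nat.mod_eq_of_lt h]
    · rw [Nat.mod_self, Walk.getVert_zero, Walk.getVert_length]
  refine ⟨hcyc, fun e => ?_, fun x => ?_⟩
  · rw [hcyc.edgeSet_eq]
    induction e using Sym2.ind with
    | _ x y =>
      simp only [Walk.mk_mem_edges_iff_exists, Finset.coe_image, Set.mem_image, Finset.coe_range,
        Set.mem_Iio]
      refine exists_congr fun i => and_congr_right fun hi => ?_
      rw [hle i hi.le, hle (i + 1) hi]
  · rw [Walk.mem_support_iff_exists_getVert]
    constructor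
    · rintro ⟨n, rfl, hn⟩
      exact ⟨n, hle n hn⟩
    · rintro ⟨n, rfl⟩
      exact ⟨_, rfl, (Nat.mod_lt n (by omega)).le⟩

/-- Deleting the edges of a cycle of a cactus separates the vertices of the cycle. -/
lemma separated_zero {v : ℕ → V} {g : ℕ} (h : IsCyc v g)
    (hd : (cycleEdgeSets G).Pairwise Disjoint) (hmem : (cyc v).edgeSet ∈ cycleEdgeSets G)
    {j : ℕ} (hj : j < g) (hr : (G \ cyc v).Reachable (v 0) (v j)) : j = 0 := by
  have h3 := h.three_le
  by_contra hj0
  have hle : cyc v ≤ G := edgeSet_subset_edgeSet.1 (subset_edgeSet_of_mem_cycleEdgeSets hmem)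
  have hlast : v (g - 1 + 1) = v 0 := by
    have := h.pred_succ 0
    simpa using this
  -- an edge of the cycle away from the first and the last one
  have hinner : ∀ i, 1 ≤ i → i + 1 < g →
      s(v i, v (i + 1)) ≠ s(v (g - 1), v 0) ∧ s(v i, v (i + 1)) ≠ s(v 0, v 1) := by
    intro i hi hig
    constructor <;> intro he <;> rcases Sym2.eq_iff.1 he with ⟨h1, h2⟩ | ⟨h1, h2⟩
    · have := h.inj hig (by omega) h2; omega
    · have := h.inj (by omega) (by omega) h1; omega
    · have := h.inj (by omega) (by omega) h1; omega
    · have := h.inj hig (by omega) h2; omega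
  have hfe : s(v 0, v 1) ≠ s(v (g - 1), v 0) := by
    intro he
    rcases Sym2.eq_iff.1 he with ⟨h1, _⟩ | ⟨_, h2⟩
    · have := h.inj (by omega) (by omega) h1; omega
    · have := h.inj (by omega) (by omega) h2; omega
  have hE : ∀ i, s(v i, v (i + 1)) ∈ (cyc v).edgeSet := fun i => h.adj_succ i
  have heE : s(v (g - 1), v 0) ∈ (cyc v).edgeSet := hlast ▸ hE (g - 1)
  set G' := G.deleteEdges {s(v (g - 1), v 0)} with hG'
  have hRle : G \ cyc v ≤ G'.deleteEdges {s(v 0, v 1)} := by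
    intro a b hab
    rw [sdiff_adj] at hab
    simp only [hG', deleteEdges_adj, Set.mem_singleton_iff]
    refine ⟨⟨hab.1, fun he => hab.2 ?_⟩, fun he => hab.2 ?_⟩
    · rw [← mem_edgeSet, he]; exact heE
    · rw [← mem_edgeSet, he]; exact hE 0
  have harc : ∀ i, 1 ≤ i → i < g → (G'.deleteEdges {s(v 0, v 1)}).Reachable (v 1) (v i) := by
    intro i hi
    induction i, hi using Nat.le_induction with
    | base => exact fun _ => Reachable.rfl
    | succ i hi ih =>
      intro hig
      refine (ih (by omega)).trans (Adj.reachable ?_)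
      simp only [hG', deleteEdges_adj, Set.mem_singleton_iff]
      exact ⟨⟨hle (h.adj_succ i), (hinner i hi hig).1⟩, (hinner i hi hig).2⟩
  obtain ⟨a, p, hp, hfp⟩ := (adj_and_reachable_delete_edges_iff_exists_cycle
    (G := G') (v := v 0) (w := v 1)).1
    ⟨by simp only [hG', deleteEdges_adj, Set.mem_singleton_iff]
        exact ⟨hle (h.adj_succ 0), hfe⟩,
      (hr.mono hRle).trans (harc j (by omega) hj).symm⟩
  have hs : {e | e ∈ p.edges} ∈ cycleEdgeSets G :=
    cycleEdgeSets_mono (deleteEdges_le _) ⟨a, p, hp, rfl⟩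
  have hne : {e | e ∈ p.edges} ≠ (cyc v).edgeSet := by
    intro he
    have h1 : s(v (g - 1), v 0) ∈ {e | e ∈ p.edges} := he ▸ heE
    have h2 := p.edges_subset_edgeSet h1
    rw [hG', edgeSet_deleteEdges] at h2
    exact h2.2 rfl
  exact Set.disjoint_left.1 (hd hs hmem hne) hfp (hE 0)

/-- `separated_zero` for an arbitrary pair of vertices of the cycle. -/
lemma separated {v : ℕ → V} {g : ℕ} (h : IsCyc v g)
    (hd : (cycleEdgeSets G).Pairwise Disjoint) (hmem : (cyc v).edgeSet ∈ cycleEdgeSets G)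
    {i j : ℕ} (hr : (G \ cyc v).Reachable (v i) (v j)) : v i = v j := by
  obtain ⟨t, ht, htj⟩ := h.exists_shift i j
  have := separated_zero (h.shift i) hd (by rwa [h.cyc_shift]) ht
    (by rw [h.cyc_shift]; exact htj ▸ hr)
  rw [← htj, this, add_zero]

/-- A connected cactus consists of one of its cycles and of a branch at every vertex of it. -/
lemma exists_branched {v : ℕ → V} {g : ℕ} (h : IsCyc v g) (hG : IsCactus G)
    (hmem : (cyc v).edgeSet ∈ cycleEdgeSets G) :
    ∃ π : V → V, (∀ x, π x = x ↔ ∃ i, v i = x) ∧ Branched (cyc v) (G \ cyc v) π id ∧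
      regraft (cyc v) (G \ cyc v) π id = G := by
  have hle : cyc v ≤ G := edgeSet_subset_edgeSet.1 (subset_edgeSet_of_mem_cycleEdgeSets hmem)
  have hex : ∀ u, ∃ i, (G \ cyc v).Reachable u (v i) := by
    intro u
    obtain ⟨p⟩ := hG.1.preconnected u (v 0)
    generalize hw : v 0 = w at p
    induction p with
    | nil => exact ⟨0, hw ▸ Reachable.rfl⟩
    | @cons a b _ hab p ih =>
      by_cases hc : (cyc v).Adj a b
      · obtain ⟨i, rfl⟩ := IsCyc.mem_range_of_adj hc
        exact ⟨i, Reachable.rfl⟩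
      · obtain ⟨i, hi⟩ := ih hw
        exact ⟨i, (Adj.reachable ((sdiff_adj _ _ _ _).2 ⟨hab, hc⟩)).trans hi⟩
  choose f hf using hex
  have huniq : ∀ u i, (G \ cyc v).Reachable u (v i) → v (f u) = v i :=
    fun u i hi => separated h hG.2 hmem ((hf u).symm.trans hi)
  have hslide : ∀ x, slide (fun u => v (f u)) id x = x := by
    intro x
    unfold slide
    split_ifs <;> rfl
  refine ⟨fun u => v (f u), fun x => ⟨fun hx => ⟨_, hx⟩, ?_⟩, ⟨?_, ?_, ?_, hf, ?_⟩, ?_⟩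
  · rintro ⟨i, rfl⟩
    exact huniq _ _ Reachable.rfl
  · exact fun u => huniq _ _ Reachable.rfl
  · intro a b hab
    obtain ⟨i, rfl⟩ := IsCyc.mem_range_of_adj hab
    exact huniq _ _ Reachable.rfl
  · exact fun a b hab => huniq _ _ ((Adj.reachable hab).trans (hf b))
  · exact fun u hu => hu
  · ext a b
    change ((cyc v).Adj a b ∨ (a ≠ b ∧ ∃ x y, _)) ↔ _
    simp only [hslide]
    constructor
    · rintro (hab | ⟨_, x, y, hxy, rfl, rfl⟩)
      · exact hle hab
      · exact ((sdiff_adj _ _ _ _).1 hxy).1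
    · intro hab
      by_cases hc : (cyc v).Adj a b
      · exact Or.inl hc
      · exact Or.inr ⟨hab.ne, a, b, (sdiff_adj _ _ _ _).2 ⟨hab, hc⟩, rfl, rfl⟩

end Decompose

/-! ### Improving a cactus that is not antipodal -/

section Improve

open scoped Classical

variable {V : Type*} [Fintype V]

/-- One of the two truncated differences vanishes, so the condition says that `i` and `j` differ by
half of the length of the cycle. -/
lemma IsCyc.numGeodesics_eq {v : ℕ → V} {g : ℕ} (h : IsCyc v g) {i j : ℕ} (hi : i < g)
    (hj : j < g) : numGeodesics (cyc v) (v i) (v j) =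
      if 2 * (i - j) = g ∨ 2 * (j - i) = g then 2 else 1 := by
  have h3 := h.three_le
  rcases le_total i j with hij | hij
  · have := (h.geodesics i (t := j - i) (by omega)).2
    rw [show i + (j - i) = j by omega] at this
    rw [numGeodesics_comm, this]
    congr 1
    apply propext
    omega
  · have := (h.geodesics j (t := i - j) (by omega)).2
    rw [show j + (i - j) = i by omega] at this
    rw [this]
    congr 1
    apply propext
    omega

/-- If the adjacent vertices `v 0` and `v 1` of a square of a cactus have degree at least three, then
moving the branches of the square to two antipodal vertices of it increases the number of
geodesics. -/
lemma improve_square_zero {G : SimpleGraph V} (hG : IsCactus G) {v : ℕ → V} (h : IsCyc v 4)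
    (hmem : (cyc v).edgeSet ∈ cycleEdgeSets G) (h0 : 3 ≤ (G.neighborSet (v 0)).ncard)
    (h1 : 3 ≤ (G.neighborSet (v 1)).ncard) :
    ∃ G' : SimpleGraph V, IsCactus G' ∧ (cycleEdgeSets G').ncard = (cycleEdgeSets G).ncard ∧
      totalGeodesics G < totalGeodesics G' := by
  obtain ⟨π, hπ, B, hreg⟩ := exists_branched h hG hmem
  have : Nonempty V := ⟨v 0⟩
  have hR : (cycleEdgeSets (G \ cyc v)).Pairwise Disjoint :=
    hG.2.mono (cycleEdgeSets_mono sdiff_le)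
  have hcore : ∀ x, π x = x → ∃ t < 4, v t = x := by
    intro x hx
    obtain ⟨i, rfl⟩ := (hπ x).1 hx
    exact h.exists_lt i
  have hr : ∀ a b, π a = a → π b = b → (cyc v).Reachable a b := by
    intro a b ha hb
    obtain ⟨i, rfl⟩ := (hπ a).1 ha
    obtain ⟨j, rfl⟩ := (hπ b).1 hb
    exact h.reachable i j
  -- the branches at `v 3`, `v 0` are moved to `v 0`, those at `v 1`, `v 2` to `v 2`
  obtain ⟨σ, hσ⟩ : ∃ σ : V → V, ∀ t < 4, σ (v t) = v (if t = 0 ∨ t = 3 then 0 else 2) := by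
    refine ⟨fun x => if x = v 0 ∨ x = v 3 then v 0 else v 2, fun t ht => ?_⟩
    have e0 : v t = v 0 ↔ t = 0 := ⟨fun hh => h.inj ht (by omega) hh, fun hh => by rw [hh]⟩
    have e3 : v t = v 3 ↔ t = 3 := ⟨fun hh => h.inj ht (by omega) hh, fun hh => by rw [hh]⟩
    simp only [e0, e3]
    split_ifs <;> rfl
  have B₂ : Branched (cyc v) (G \ cyc v) π σ := by
    refine ⟨B.idem, B.core, B.fib, B.reach, fun u hu => ?_⟩
    obtain ⟨t, ht, rfl⟩ := hcore u hu
    rw [hσ t ht]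
    exact (hπ _).2 ⟨_, rfl⟩
  have hC : Finset.univ.filter (fun x => π x = x) = (Finset.range 4).image v := by
    ext x
    simp only [Finset.mem_filter, Finset.mem_univ, true_and, Finset.mem_image, Finset.mem_range]
    exact ⟨hcore x, fun ⟨i, _, hi⟩ => (hπ x).2 ⟨i, hi⟩⟩
  have hsum : ∀ t < 4, ∑ x with π x = x, numGeodesics (cyc v) (v t) x = 5 := by
    intro t ht
    rw [hC, Finset.sum_image (fun i hi j hj hij => h.inj (by simpa using hi) (by simpa using hj) hij),
      Finset.sum_congr rfl (fun s hs => h.numGeodesics_eq ht (by simpa using hs))]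
    interval_cases t <;> decide
  -- a neighbour of an active vertex off the square
  have hout : ∀ t, 3 ≤ (G.neighborSet (v t)).ncard → ∃ x, π x ≠ x ∧ π x = v t := by
    intro t ht
    obtain ⟨x, hx, hxn⟩ : ∃ x ∈ G.neighborSet (v t), x ∉ ({v (t + 1), v (t + (4 - 1))} : Set V) := by
      by_contra! hcon
      have h2 := Set.ncard_le_ncard hcon (Set.toFinite _)
      have h3 : ({v (t + 1), v (t + (4 - 1))} : Set V).ncard ≤ 2 :=
        (Set.ncard_insert_le _ _).trans (by rw [Set.ncard_singleton])
      omega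
    have hadj : (G \ cyc v).Adj (v t) x :=
      (sdiff_adj _ _ _ _).2 ⟨hx, fun hc => hxn (h.adj_iff.1 hc)⟩
    have hc : π (v t) = v t := (hπ _).2 ⟨t, rfl⟩
    exact ⟨x, B.not_core_of_adj hadj hc, (B.fib _ _ hadj).symm.trans hc⟩
  obtain ⟨hcac, hcard⟩ := isCactus_regraft B B₂ hr (hreg.symm ▸ hG) hR h.pairwise_disjoint rfl
  refine ⟨_, hcac, hcard.trans (by rw [hreg]), ?_⟩
  conv_lhs => rw [← hreg]
  refine totalGeodesics_lt B B₂ hr hr ?_ ?_ (fun _ _ _ _ => le_rfl) (Or.inr ?_)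
  · intro a b ha hb
    obtain ⟨i, hi, rfl⟩ := hcore a ha
    obtain ⟨j, hj, rfl⟩ := hcore b hb
    rw [hσ i hi, hσ j hj, h.numGeodesics_eq hi hj,
      h.numGeodesics_eq (by split_ifs <;> omega) (by split_ifs <;> omega)]
    interval_cases i <;> interval_cases j <;> decide
  · intro a ha
    obtain ⟨i, hi, rfl⟩ := hcore a ha
    rw [hσ i hi, hsum i hi, hsum _ (by split_ifs <;> omega)]
  · obtain ⟨x, hx, hx0⟩ := hout 0 h0
    obtain ⟨y, hy, hy1⟩ := hout 1 h1
    refine ⟨x, y, hx, hy, ?_, ?_⟩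
    · rw [hx0, hy1]
      exact fun he => absurd (h.inj (by omega) (by omega) he) (by omega)
    · rw [hx0, hy1, hσ 0 (by omega), hσ 1 (by omega), h.numGeodesics_eq (by omega) (by omega),
        h.numGeodesics_eq (by split_ifs <;> omega) (by split_ifs <;> omega)]
      decide

/-- `improve_square_zero` for an arbitrary edge of the square. -/
lemma improve_square {G : SimpleGraph V} (hG : IsCactus G) {v : ℕ → V} (h : IsCyc v 4)
    (hmem : (cyc v).edgeSet ∈ cycleEdgeSets G) (i : ℕ) (h0 : 3 ≤ (G.neighborSet (v i)).ncard)
    (h1 : 3 ≤ (G.neighborSet (v (i + 1))).ncard) :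
    ∃ G' : SimpleGraph V, IsCactus G' ∧ (cycleEdgeSets G').ncard = (cycleEdgeSets G).ncard ∧
      totalGeodesics G < totalGeodesics G' :=
  improve_square_zero hG (h.shift i) (by rwa [h.cyc_shift]) h0 h1

/-- The graph joining every vertex that is not fixed by `π` to its image. -/
def retractGraph (π : V → V) : SimpleGraph V where
  Adj x y := x ≠ y ∧ (π x = y ∨ π y = x)
  symm := ⟨fun _ _ hxy => ⟨hxy.1.symm, hxy.2.symm⟩⟩
  loopless := ⟨fun _ hx => hx.1 rfl⟩

omit [Fintype V] in
lemma cycleEdgeSets_retractGraph {π : V → V} (hπ : ∀ x, π (π x) = π x) :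
    cycleEdgeSets (retractGraph π) = ∅ := by
  rw [Set.eq_empty_iff_forall_notMem]
  rintro s ⟨u, c, hc, rfl⟩
  -- an end of the star is not on a cycle
  have key : ∀ x y, s(x, y) ∈ c.edges → π x = y → False := by
    intro x y hxy hx
    have hne : x ≠ y := (c.adj_of_mem_edges hxy).ne
    have h2 := hc.ncard_neighborSet_toSubgraph_eq_two (c.fst_mem_support_of_mem_edges hxy)
    have hsub : c.toSubgraph.neighborSet x ⊆ {y} := by
      intro z hz
      have hz' : (retractGraph π).Adj x z := c.toSubgraph.adj_sub hz
      rcases hz'.2 with h | h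
      · exact h.symm.trans hx
      · exact absurd (by rw [← h, hπ, h] : π x = x) (by rw [hx]; exact hne.symm)
    have := Set.ncard_le_ncard hsub
    rw [Set.ncard_singleton] at this
    omega
  obtain ⟨x, y, hxy⟩ := exists_edge_of_isCycle hc
  rcases (c.adj_of_mem_edges hxy).2 with h | h
  · exact key x y hxy h
  · exact key y x (Sym2.eq_swap ▸ hxy) h

omit [Fintype V] in
lemma anchor_id {π : V → V} (u : V) : anchor π id u = π u := by
  unfold anchor
  split_ifs with h
  · exact h.symm
  · rfl

omit [Fintype V] in
lemma slide_id {π : V → V} (u : V) : slide π id u = u := by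
  unfold slide
  split_ifs <;> rfl

/-- A cycle of length at least five of a cactus can be replaced, increasing the number of geodesics,
by a square with pendant vertices at two antipodal vertices. -/
lemma improve_long {G : SimpleGraph V} (hG : IsCactus G) {v : ℕ → V} {g : ℕ} (h : IsCyc v g)
    (hg : 5 ≤ g) (hmem : (cyc v).edgeSet ∈ cycleEdgeSets G) :
    ∃ G' : SimpleGraph V, IsCactus G' ∧ (cycleEdgeSets G').ncard = (cycleEdgeSets G).ncard ∧
      totalGeodesics G < totalGeodesics G' := by
  obtain ⟨π, hπ, B, hreg⟩ := exists_branched h hG hmem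
  have : Nonempty V := ⟨v 0⟩
  have hR : (cycleEdgeSets (G \ cyc v)).Pairwise Disjoint :=
    hG.2.mono (cycleEdgeSets_mono sdiff_le)
  have hcore : ∀ x, π x = x → ∃ t < g, v t = x := by
    intro x hx
    obtain ⟨i, rfl⟩ := (hπ x).1 hx
    exact h.exists_lt i
  obtain ⟨m, hm⟩ : ∃ m, m = g / 2 := ⟨_, rfl⟩
  -- The square `v 0, v 1, v m, v (m + 1)`. The pairs `v 0, v m` and `v 1, v (m + 1)` are antipodal in
  -- it, as they are in the original cycle if `g` is even.
  obtain ⟨q, hq⟩ : ∃ q : ℕ → ℕ, ∀ i, q i =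
      if i % 4 = 0 then 0 else if i % 4 = 1 then 1 else if i % 4 = 2 then m else m + 1 :=
    ⟨_, fun _ => rfl⟩
  have hqlt : ∀ i, q i < g := by intro i; rw [hq]; split_ifs <;> omega
  have hw : IsCyc (fun i => v (q i)) 4 := by
    refine ⟨by omega, fun i j => ⟨fun hij => ?_, fun hij => ?_⟩⟩
    · have := h.inj (hqlt i) (hqlt j) hij
      rw [hq, hq] at this
      unfold Nat.ModEq
      split_ifs at this <;> omega
    · have hij' : i % 4 = j % 4 := hij
      simp only [hq, hij']
  -- `v t` is attached to `v 0` for `2 ≤ t < m`, and to `v m` for `m + 2 ≤ t < g`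
  obtain ⟨p, hp⟩ : ∃ p : ℕ → ℕ, ∀ t, p t =
      if 2 ≤ t ∧ t < m then 0 else if m + 2 ≤ t then m else t := ⟨_, fun _ => rfl⟩
  have hplt : ∀ t < g, p t < g := by intro t ht; rw [hp]; split_ifs <;> omega
  have hpp : ∀ t, p (p t) = p t := by
    intro t; rw [hp (p t), hp t]; split_ifs <;> omega
  have hpq : ∀ t < g, ∃ s < 4, p t = q s := by
    intro t ht
    have : p t = 0 ∨ p t = 1 ∨ p t = m ∨ p t = m + 1 := by rw [hp]; split_ifs <;> omega
    rcases this with h' | h' | h' | h'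
    · exact ⟨0, by omega, by rw [h', hq]; simp⟩
    · exact ⟨1, by omega, by rw [h', hq]; simp⟩
    · exact ⟨2, by omega, by rw [h', hq]; simp⟩
    · exact ⟨3, by omega, by rw [h', hq]; simp⟩
  have hpq' : ∀ s, p (q s) = q s := by
    intro s; rw [hp, hq]; split_ifs <;> omega
  obtain ⟨ρ, hρ, hρ'⟩ : ∃ ρ : V → V, (∀ t < g, ρ (v t) = v (p t)) ∧
      ∀ x, ρ x ≠ x → ∃ t < g, v t = x := by
    refine ⟨fun x => if hx : ∃ t < g, v t = x then v (p hx.choose) else x, fun t ht => ?_,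
      fun x hx => ?_⟩
    · have hx : ∃ s < g, v s = v t := ⟨t, ht, rfl⟩
      simp only [dif_pos hx]
      rw [h.inj hx.choose_spec.1 ht hx.choose_spec.2]
    · by_contra hcon
      simp only [dif_neg hcon, ne_eq, not_true_eq_false] at hx
  have hρρ : ∀ x, ρ (ρ x) = ρ x := by
    intro x
    by_cases hx : ρ x = x
    · rw [hx, hx]
    · obtain ⟨t, ht, rfl⟩ := hρ' x hx
      rw [hρ t ht, hρ _ (hplt t ht), hpp]
  have B' : Branched (cyc fun i => v (q i)) (retractGraph ρ) ρ id := by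
    refine ⟨hρρ, ?_, ?_, ?_, fun u hu => hu⟩
    · intro a b hab
      obtain ⟨i, rfl⟩ := IsCyc.mem_range_of_adj hab
      rw [hρ _ (hqlt i), hpq']
    · rintro a b ⟨_, rfl | rfl⟩
      · exact (hρρ a).symm
      · exact hρρ b
    · intro u
      by_cases hu : ρ u = u
      · rw [hu]
      · exact Adj.reachable ⟨fun he => hu he.symm, Or.inl rfl⟩
  have hacyc : (cycleEdgeSets (retractGraph ρ)).Pairwise Disjoint := by
    rw [cycleEdgeSets_retractGraph hρρ]
    exact Set.pairwise_empty _
  have hmoved : ∀ t < g, ρ (v t) ≠ v t ↔ p t ≠ t := by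
    intro t ht
    rw [hρ t ht]
    exact not_congr ⟨fun he => h.inj (hplt t ht) ht he, fun he => by rw [he]⟩
  have hstar : (retractGraph ρ).edgeSet.ncard = g - 4 := by
    have hE : (retractGraph ρ).edgeSet =
        (((Finset.range g \ {0, 1, m, m + 1}).image fun t => s(v t, v (p t)) :
          Finset (Sym2 V)) : Set (Sym2 V)) := by
      ext e
      induction e using Sym2.ind with
      | _ x y =>
        simp only [mem_edgeSet, Finset.coe_image, Set.mem_image, Finset.mem_coe,
          Finset.mem_sdiff, Finset.mem_range, Finset.mem_insert, Finset.mem_singleton]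
        have hne : ∀ t < g, (p t ≠ t ↔ ¬ (t = 0 ∨ t = 1 ∨ t = m ∨ t = m + 1)) := by
          intro t ht
          rw [hp]
          split_ifs <;> omega
        have hone : ∀ a b, a ≠ b → ρ a = b → ∃ t, (t < g ∧
            ¬ (t = 0 ∨ t = 1 ∨ t = m ∨ t = m + 1)) ∧ s(v t, v (p t)) = s(a, b) := by
          rintro a _ hab rfl
          obtain ⟨t, ht, rfl⟩ := hρ' a hab.symm
          exact ⟨t, ⟨ht, (hne t ht).1 ((hmoved t ht).1 hab.symm)⟩, by rw [hρ t ht]⟩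
        constructor
        · rintro ⟨hxy, h1 | h1⟩
          · exact hone x y hxy h1
          · rw [Sym2.eq_swap]
            exact hone y x hxy.symm h1
        · rintro ⟨t, ⟨ht, htn⟩, he⟩
          rw [← mem_edgeSet, ← he, mem_edgeSet]
          refine ⟨fun hh => ?_, Or.inl (hρ t ht)⟩
          exact (hne t ht).2 htn (h.inj ht (hplt t ht) hh).symm
    rw [hE, Set.ncard_coe_finset, Finset.card_image_of_injOn, Finset.card_sdiff_of_subset,
      Finset.card_range]
    · congr 1
      rw [Finset.card_insert_of_notMem, Finset.card_insert_of_notMem, Finset.card_pair]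
      · omega
      · simp only [Finset.mem_insert, Finset.mem_singleton]; omega
      · simp only [Finset.mem_insert, Finset.mem_singleton]; omega
    · intro x hx
      simp only [Finset.mem_insert, Finset.mem_singleton] at hx
      rw [Finset.mem_range]
      omega
    · intro s hs t ht hst
      simp only [Finset.coe_sdiff, Set.mem_sdiff, Finset.mem_coe, Finset.mem_range,
        Finset.mem_insert, Finset.mem_singleton] at hs ht
      rcases Sym2.eq_iff.1 hst with ⟨h1, _⟩ | ⟨h1, h2⟩
      · exact h.inj hs.1 ht.1 h1
      · exfalso
        have e1 := h.inj hs.1 (hplt t ht.1) h1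
        rw [hp] at e1
        split_ifs at e1 <;> omega
  set H := regraft (cyc fun i => v (q i)) (retractGraph ρ) ρ id with hH
  have hHE : (cyc v).edgeSet.ncard = H.edgeSet.ncard := by
    rw [hH, B'.ncard_edgeSet_regraft, hstar, hw.ncard_edgeSet, h.ncard_edgeSet]
    omega
  have hHd : (cycleEdgeSets H).Pairwise Disjoint :=
    B'.pairwise_disjoint_regraft hw.pairwise_disjoint hacyc
  have hanch : ∀ t < g, ∃ s < 4, ρ (v t) = v (q s) := by
    intro t ht
    obtain ⟨s, hs, hps⟩ := hpq t ht
    exact ⟨s, hs, by rw [hρ t ht, hps]⟩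
  have hreach : ∀ s < g, ∀ t < g, (cyc fun i => v (q i)).Reachable
      (anchor ρ id (v s)) (anchor ρ id (v t)) := by
    intro s hs t ht
    obtain ⟨i, _, hi⟩ := hanch s hs
    obtain ⟨j, _, hj⟩ := hanch t ht
    rw [anchor_id, anchor_id, hi, hj]
    exact hw.reachable i j
  have hHr : ∀ a b, π a = a → π b = b → H.Reachable a b := by
    intro a b ha hb
    obtain ⟨s, hs, rfl⟩ := hcore a ha
    obtain ⟨t, ht, rfl⟩ := hcore b hb
    exact (B'.regraft_geodesics (hreach s hs t ht)).1
  -- antipodal vertices of the square, hence also the vertices attached to them, are joined by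
  -- two geodesics
  have htwo : ∀ s < g, ∀ t < g, (p s = 0 ∧ p t = m) ∨ (p s = m ∧ p t = 0) ∨
      (p s = 1 ∧ p t = m + 1) ∨ (p s = m + 1 ∧ p t = 1) →
      2 ≤ numGeodesics H (v s) (v t) := by
    intro s hs t ht hst
    have hne : p s ≠ p t := by omega
    have hcyc2 : ∀ i < 4, ∀ j < 4, (2 * (i - j) = 4 ∨ 2 * (j - i) = 4) → p s = q i → p t = q j →
        numGeodesics (cyc fun i => v (q i)) (v (p s)) (v (p t)) = 2 := by
      intro i hi j hj hij hsi htj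
      have := hw.numGeodesics_eq hi hj
      rw [if_pos hij] at this
      rw [hsi, htj, this]
    have q0 : q 0 = 0 := by rw [hq]; simp
    have q1 : q 1 = 1 := by rw [hq]; simp
    have q2 : q 2 = m := by rw [hq]; simp
    have q3 : q 3 = m + 1 := by rw [hq]; simp
    have hcyc : numGeodesics (cyc fun i => v (q i)) (v (p s)) (v (p t)) = 2 := by
      rcases hst with ⟨h1, h2⟩ | ⟨h1, h2⟩ | ⟨h1, h2⟩ | ⟨h1, h2⟩
      · exact hcyc2 0 (by omega) 2 (by omega) (by omega) (h1.trans q0.symm) (h2.trans q2.symm)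
      · exact hcyc2 2 (by omega) 0 (by omega) (by omega) (h1.trans q2.symm) (h2.trans q0.symm)
      · exact hcyc2 1 (by omega) 3 (by omega) (by omega) (h1.trans q1.symm) (h2.trans q3.symm)
      · exact hcyc2 3 (by omega) 1 (by omega) (by omega) (h1.trans q3.symm) (h2.trans q1.symm)
    rw [(B'.regraft_geodesics (hreach s hs t ht)).2.2, glueNum, if_neg, anchor_id, anchor_id,
      hρ s hs, hρ t ht, hcyc]
    · have e1 := numGeodesics_pos (retractGraph ρ) (B'.reach (v s))
      have e2 := numGeodesics_pos (retractGraph ρ) (B'.reach (v t))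
      rw [hρ s hs] at e1
      rw [hρ t ht] at e2
      nlinarith [Nat.mul_le_mul e1 e2]
    · rintro ⟨he, -⟩
      rw [hρ s hs, hρ t ht] at he
      exact hne (h.inj (hplt s hs) (hplt t ht) he)
  have hcoreH : ∀ i j, π i = i → π j = j →
      numGeodesics (cyc v) i j ≤ numGeodesics H i j := by
    intro a b ha hb
    have hpos := numGeodesics_pos H (hHr a b ha hb)
    obtain ⟨s, hs, rfl⟩ := hcore a ha
    obtain ⟨t, ht, rfl⟩ := hcore b hb
    rw [h.numGeodesics_eq hs ht]
    split_ifs with hst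
    · refine htwo s hs t ht ?_
      rw [hp, hp]
      split_ifs <;> omega
    · exact hpos
  have BH : Branched H (G \ cyc v) π id := by
    refine ⟨B.idem, ?_, B.fib, B.reach, B.maps⟩
    intro a b hab
    rw [hπ]
    have hmv : ∀ x, ρ x ≠ x → (∃ i, v i = x) ∧ ∃ i, v i = ρ x := by
      intro x hx
      obtain ⟨t, ht, rfl⟩ := hρ' x hx
      exact ⟨⟨t, rfl⟩, ⟨p t, (hρ t ht).symm⟩⟩
    rcases B'.adj_iff.1 hab with hab | ⟨x, y, hxy, hx, hy⟩
    · obtain ⟨i, rfl⟩ := IsCyc.mem_range_of_adj hab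
      exact ⟨q i, rfl⟩
    · rw [slide_id] at hx hy
      subst hx hy
      rcases hxy with ⟨hne, h1 | h1⟩
      · exact (hmv x (by rw [h1]; exact hne.symm)).1
      · rw [← h1]
        exact (hmv y (by rw [h1]; exact hne)).2
  obtain ⟨hcac, hcard⟩ := isCactus_regraft B BH hHr (hreg.symm ▸ hG) hR hHd hHE
  refine ⟨_, hcac, hcard.trans (by rw [hreg]), ?_⟩
  conv_lhs => rw [← hreg]
  refine totalGeodesics_lt B BH ?_ hHr hcoreH ?_ hcoreH (Or.inl ?_)
  · intro a b ha hb
    obtain ⟨i, rfl⟩ := (hπ a).1 ha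
    obtain ⟨j, rfl⟩ := (hπ b).1 hb
    exact h.reachable i j
  · intro i hi
    exact Finset.sum_le_sum fun j hj => hcoreH i j hi (by simpa using hj)
  · refine ⟨v 0, v (g - 1), (hπ _).2 ⟨_, rfl⟩, (hπ _).2 ⟨_, rfl⟩, ?_⟩
    rw [h.numGeodesics_eq (by omega) (by omega), if_neg (by omega)]
    refine htwo 0 (by omega) (g - 1) (by omega) (Or.inl ⟨?_, ?_⟩)
    · rw [hp]; split_ifs <;> omega
    · rw [hp]; split_ifs <;> omega

/-- A cactus that is not antipodal can be improved without changing its number of cycles. -/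
lemma improve {G : SimpleGraph V} (hG : IsCactus G) (hna : ¬ IsAntipodalCactus G) :
    ∃ G' : SimpleGraph V, IsCactus G' ∧ (cycleEdgeSets G').ncard = (cycleEdgeSets G).ncard ∧
      totalGeodesics G < totalGeodesics G' := by
  by_cases hgr : IsGirthRestricted G
  · have h4 : ∃ (u : V) (c : G.Walk u u), c.IsCycle ∧ c.length = 4 ∧
        (∃ x y : V, x ≠ y ∧ x ∈ c.support ∧ y ∈ c.support ∧
          IsActiveVertex G x ∧ IsActiveVertex G y) ∧
        ∀ x y : V, x ≠ y → x ∈ c.support → y ∈ c.support →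
          IsActiveVertex G x → IsActiveVertex G y → s(x, y) ∉ c.edges →
          ∃ z ∈ c.support, IsActiveVertex G z ∧ z ≠ x ∧ z ≠ y := by
      by_contra! hcon
      refine hna ⟨hG, hgr, fun u c hc hl hmulti => ?_⟩
      obtain ⟨x, y, h1, h2, h3, h4, h5, h6, h7⟩ := hcon u c hc hl hmulti
      refine ⟨x, y, h1, h2, h3, h4, h5, h6, fun z hz hza => ?_⟩
      by_cases hzx : z = x
      · exact Or.inl hzx
      · exact Or.inr (h7 z hz hza hzx)
    obtain ⟨u, c, hc, hl, ⟨x, y, hxy, hx, hy, hxa, hya⟩, hall⟩ := h4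
    obtain ⟨hcyc, hedges, hsupp⟩ := isCyc_of_isCycle hc
    set v : ℕ → V := fun i => c.getVert (i % c.length) with hv
    have hmem : (cyc v).edgeSet ∈ cycleEdgeSets G :=
      ⟨u, c, hc, by ext e; exact (hedges e).symm⟩
    rw [hl] at hcyc
    obtain ⟨i, hi⟩ := (hsupp x).1 hx
    change v i = x at hi
    -- two active vertices at distance one on the square
    have hadj : ∀ a b, a < 4 → b < 4 → IsActiveVertex G (v (i + a)) → IsActiveVertex G (v (i + b)) →
        (b = a + 1 ∨ (a = 0 ∧ b = 3)) → _ :=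
      fun a b ha hb haa hba hab => improve_square hG hcyc hmem
        (if b = a + 1 then i + a else i + b)
        (by split_ifs
            · exact haa.2
            · exact hba.2)
        (by split_ifs with hh
            · rw [hh] at hba; exact hba.2
            · obtain ⟨rfl, rfl⟩ : a = 0 ∧ b = 3 := by omega
              rw [show i + 3 + 1 = i + 0 + 4 by omega, hcyc.map_add]
              exact haa.2)
    obtain ⟨j, hj⟩ := (hsupp y).1 hy
    change v j = y at hj
    obtain ⟨t, ht, htj⟩ := hcyc.exists_shift i j
    rw [hj] at htj
    have hx0 : IsActiveVertex G (v (i + 0)) := by rw [add_zero, hi]; exact hxa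
    have hyt : IsActiveVertex G (v (i + t)) := by rw [htj]; exact hya
    have ht0 : t ≠ 0 := by rintro rfl; exact hxy (by rw [← hi, ← htj, add_zero])
    by_cases ht2 : t = 2
    · subst ht2
      have hnadj : s(x, y) ∉ c.edges := by
        rw [hedges, mem_edgeSet, ← hi, hcyc.adj_iff, ← htj]
        have hs := hcyc.shift i
        rintro (he | he)
        · have := hs.inj (i := 2) (j := 1) (by omega) (by omega) he; omega
        · have := hs.inj (i := 2) (j := 3) (by omega) (by omega) he; omega
      obtain ⟨z, hz, hza, hzx, hzy⟩ := hall x y hxy hx hy hxa hya hnadj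
      obtain ⟨k, hk⟩ := (hsupp z).1 hz
      change v k = z at hk
      obtain ⟨r, hr, hrk⟩ := hcyc.exists_shift i k
      rw [hk] at hrk
      have hzr : IsActiveVertex G (v (i + r)) := by rw [hrk]; exact hza
      have hr0 : r ≠ 0 := by rintro rfl; exact hzx (by rw [← hi, ← hrk, add_zero])
      have hr2 : r ≠ 2 := by rintro rfl; exact hzy (by rw [← htj, ← hrk])
      exact hadj 0 r (by omega) hr hx0 hzr (by omega)
    · exact hadj 0 t (by omega) ht hx0 hyt (by omega)
  · unfold IsGirthRestricted at hgr
    push Not at hgr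
    obtain ⟨u, c, hc, h3, h4⟩ := hgr
    have := hc.three_le_length
    obtain ⟨hcyc, hedges, _⟩ := isCyc_of_isCycle hc
    exact improve_long hG hcyc (by omega) ⟨u, c, hc, by ext e; exact (hedges e).symm⟩

end Improve

/-- if a cactus `G` on `n` vertices with `k` cycles is not antipodal, then
some antipodal cactus `G'` on `n` vertices with `k` cycles has a strictly larger geodesic
subpath number. -/
theorem cactus_not_antipodal_not_maximal {V : Type*} [Fintype V] [DecidableEq V]
    (G : SimpleGraph V) (k : ℕ) (hG : IsCactus G) (hk : (cycleEdgeSets G).ncard = k)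
    (hna : ¬ IsAntipodalCactus G) :
    ∃ G' : SimpleGraph V, IsAntipodalCactus G' ∧
      (cycleEdgeSets G').ncard = k ∧ gpn G < gpn G' := by
  have step : ∀ G₁ : SimpleGraph V, IsCactus G₁ → (cycleEdgeSets G₁).ncard = k →
      ¬ IsAntipodalCactus G₁ →
      ∃ G₂ : SimpleGraph V, IsCactus G₂ ∧ (cycleEdgeSets G₂).ncard = k ∧ gpn G₁ < gpn G₂ := by
    intro G₁ h₁ hk₁ hn₁
    obtain ⟨G₂, h₂, hk₂, hlt⟩ := improve h₁ hn₁
    have e₁ := two_mul_gpn G₁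
    have e₂ := two_mul_gpn G₂
    exact ⟨G₂, h₂, hk₂.trans hk₁, by omega⟩
  -- A cactus with `k` cycles and more geodesics than `G`, with as many of them as possible.
  obtain ⟨G', ⟨hc, hck, hlt⟩, hmax⟩ := (Set.toFinite {G' : SimpleGraph V | IsCactus G' ∧
    (cycleEdgeSets G').ncard = k ∧ gpn G < gpn G'}).exists_maximalFor gpn _ (step G hG hk hna)
  refine ⟨G', ?_, hck, hlt⟩
  by_contra hn
  obtain ⟨G'', hc'', hck'', hlt''⟩ := step G' hc hck hn
  exact absurd (hmax ⟨hc'', hck'', hlt.trans hlt''⟩ hlt''.le) (not_le.2 hlt'')
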